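/- Fix α > 0. For n > α/π let ψ_{α,n} be as in the context, and let ψ_n^{(1)}(t) = u_{−1/2,1}((t−μ_{α,n})/(1−μ_{α,n}t)) − 1 and ψ_n^{(−1)}(t) = u_{1/2,1}((−t−μ_{α,n})/(1+μ_{α,n}t)) − 1. Then the bounded operators I + H(ψ_{α,n}), I + H(ψ_n^{(1)}) and I + H(ψ_n^{(−1)}) on ℓ²(ℕ) are invertible, and det[P_n (I+H(ψ_{α,n}))^{−1} P_n] − det[P_n (I+H(ψ_n^{(1)}))^{−1} P_n] · det[P_n (I+H(ψ_n^{(−1)}))^{−1} P_n] → 0 as n → ∞. -/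

import Mathlib

open Filter MeasureTheory
open scoped InnerProductSpace

noncomputable section

/-- ℓ²(ℕ) over ℂ. -/
abbrev l2 : Type := lp (fun _ : ℕ => ℂ) 2

/-- The `k`-th Fourier coefficient of a function on the unit circle, given as a
`2π`-periodic function of the angle: `a_k = (1/(2π)) ∫_0^{2π} f(θ) e^{-ikθ} dθ`. -/
def fc (f : ℝ → ℂ) (k : ℤ) : ℂ :=
  ((1 / (2 * Real.pi) : ℝ) : ℂ) *
    ∫ θ in (0:ℝ)..(2 * Real.pi), f θ * Complex.exp (-(Complex.I * k * θ))

/-- The standard orthonormal basis vector `e_j` of ℓ²(ℕ). -/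
def ee (j : ℕ) : l2 := lp.single 2 j 1

/-- Matrix entry `⟨e_j, A e_k⟩` of an operator on ℓ²(ℕ). -/
def ent (A : l2 →L[ℂ] l2) (j k : ℕ) : ℂ := ⟪ee j, A (ee k)⟫_ℂ

/-- The determinant of the `n × n` section `Pₙ A Pₙ` of an operator on ℓ²(ℕ). -/
def detP (n : ℕ) (A : l2 →L[ℂ] l2) : ℂ := (Matrix.of fun j k : Fin n => ent A j k).det

/-- The function `χ` on the circle: `χ(e^{iθ}) = i` for `0 < θ < π` and
`χ(e^{iθ}) = −i` for `−π < θ < 0`. -/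
def chi (θ : ℝ) : ℂ := if 0 < Real.sin θ then Complex.I else -Complex.I

/-- The function `u_{β,1}` evaluated at a point `t` of the unit circle:
`u_{β,1}(e^{iθ}) = exp(iβ(θ−π))` for `0 < θ < 2π`, i.e. `exp(β · Log(−t))`. -/
def uc (β : ℂ) (t : ℂ) : ℂ := Complex.exp (β * Complex.log (-t))

/-!
By Cauchy's theorem the Fourier integral over the upper half circle moves to the real axis, where
the continuations of the symbols have boundary values with explicit imaginary parts. This gives the
Fourier coefficients as moments: `a_{m+1} = π⁻¹ ∫ s ^ m w₁(s) ds` for `ψ^{(1)}` and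
`a_{m+1} = (-1) ^ m π⁻¹ ∫ s ^ m w₂(s) ds` for `ψ^{(-1)}`, with positive weights on `(μ, 1)`, and for
`ψ` the sum of two such moments, whose weights are `r w₁` and `w₂ / r` with `r = 1 + O(1 - μ)`.

Hankel matrices of moments are positive semidefinite, so the three operators `I + H` are invertible
and their inverses are contractions. The alternating sign makes `H(ψ^{(1)}) H(ψ^{(-1)})` and
`H(ψ^{(-1)}) (I - Pₙ) H(ψ^{(1)})` small in the Hilbert–Schmidt norm, namely `O(1 - μ)`, although
neither factor is small in the operator norm. Hence `Pₙ (I + H(ψ))⁻¹ Pₙ` differs from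
`Pₙ (I + H(ψ^{(-1)}))⁻¹ Pₙ (I + H(ψ^{(1)}))⁻¹ Pₙ` by `O(1 - μ)` in that norm. For contractions,
Hadamard's inequality bounds a difference of `n × n` determinants by the sum of the norms of the
differences of the columns, which is at most `√n` times the Hilbert–Schmidt norm, and
`√n (1 - μ_{α,n})` tends to zero.
-/

/-! ### Hadamard's inequality -/

section Determinant

variable {𝕜 E : Type*} [RCLike 𝕜] [NormedAddCommGroup E] [InnerProductSpace 𝕜 E] {n : ℕ}

theorem norm_det_orthonormalBasis_le (e : OrthonormalBasis (Fin n) 𝕜 E) (v : Fin n → E) :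
    ‖e.toBasis.det v‖ ≤ ∏ i, ‖v i‖ := by
  have : FiniteDimensional 𝕜 E := e.toBasis.finiteDimensional_of_finite
  set b := InnerProductSpace.gramSchmidtOrthonormalBasis
    (Module.finrank_eq_card_basis e.toBasis) v
  have hdet : e.toBasis.det v = e.toBasis.det b * b.toBasis.det v := by
    rw [Module.Basis.det_apply, Module.Basis.det_apply, Module.Basis.det_apply, ← Matrix.det_mul,
      ← b.coe_toBasis, Module.Basis.toMatrix_mul_toMatrix]
  rw [hdet, norm_mul, e.det_to_matrix_orthonormalBasis b, one_mul,
    InnerProductSpace.gramSchmidtOrthonormalBasis_det, norm_prod]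
  gcongr with i
  exact (norm_inner_le_norm _ _).trans_eq (by rw [b.orthonormal.1 i, one_mul])

theorem norm_det_orthonormalBasis_sub_le (e : OrthonormalBasis (Fin n) 𝕜 E) {v w : Fin n → E}
    (hv : ∀ i, ‖v i‖ ≤ 1) (hw : ∀ i, ‖w i‖ ≤ 1) :
    ‖e.toBasis.det v - e.toBasis.det w‖ ≤ ∑ i, ‖v i - w i‖ := by
  refine (MultilinearMap.norm_image_sub_le_of_bound' e.toBasis.det.toMultilinearMap zero_le_one
    (fun m => by simpa using norm_det_orthonormalBasis_le e m) v w).trans ?_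
  rw [one_mul]
  gcongr with i
  rw [← Finset.mul_prod_erase _ _ (Finset.mem_univ i), if_pos rfl]
  refine mul_le_of_le_one_right (norm_nonneg _)
    (Finset.prod_le_one (fun j hj => ?_) fun j hj => ?_) <;>
    rw [if_neg (Finset.ne_of_mem_erase hj)]
  · exact le_max_of_le_left (norm_nonneg _)
  · exact max_le (hv j) (hw j)

end Determinant

/-! ### Matrix entries and finite sections -/

theorem orthonormal_ee : Orthonormal ℂ ee := by
  rw [orthonormal_iff_ite]
  intro i j
  simp [ee, lp.inner_single_left, lp.single_apply, Pi.single_apply]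

theorem norm_ee (j : ℕ) : ‖ee j‖ = 1 := orthonormal_ee.1 j

theorem inner_ee_left (j : ℕ) (x : l2) : ⟪ee j, x⟫_ℂ = x j := by
  simp [ee, lp.inner_single_left]

theorem hasSum_smul_ee (x : l2) : HasSum (fun j => x j • ee j) x := by
  convert lp.hasSum_single (p := 2) (by simp) x using 2 with j
  rw [ee, ← lp.single_smul, smul_eq_mul, mul_one]

theorem hasSum_norm_sq (x : l2) : HasSum (fun j => ‖x j‖ ^ 2) (‖x‖ ^ 2) := by
  simpa using lp.hasSum_norm (p := 2) (by simp) x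

theorem sum_norm_sq_le (x : l2) (N : ℕ) : ∑ j ∈ Finset.range N, ‖x j‖ ^ 2 ≤ ‖x‖ ^ 2 :=
  sum_le_hasSum _ (fun _ _ => by positivity) (hasSum_norm_sq x)

theorem ent_eq_apply (A : l2 →L[ℂ] l2) (j k : ℕ) : ent A j k = A (ee k) j := inner_ee_left _ _

theorem ent_one (j k : ℕ) : ent 1 j k = if j = k then 1 else 0 :=
  orthonormal_iff_ite.1 orthonormal_ee j k

theorem ent_add (X Y : l2 →L[ℂ] l2) (j k : ℕ) : ent (X + Y) j k = ent X j k + ent Y j k := by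
  simp [ent_eq_apply]

theorem ent_sub (X Y : l2 →L[ℂ] l2) (j k : ℕ) : ent (X - Y) j k = ent X j k - ent Y j k := by
  simp [ent_eq_apply]

theorem hasSum_ent_mul (A B : l2 →L[ℂ] l2) (j k : ℕ) :
    HasSum (fun l => ent A j l * ent B l k) (ent (A * B) j k) := by
  have h := ((hasSum_smul_ee (B (ee k))).mapL A).mapL (innerSL ℂ (ee j))
  refine h.congr_fun fun l => ?_
  simp only [map_smul, innerSL_apply_apply, smul_eq_mul]
  rw [ent_eq_apply B, mul_comm, ent]

/-- The orthogonal projection `Pₙ` onto the span of `e_0, …, e_{n-1}`. -/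
def proj (n : ℕ) : l2 →L[ℂ] l2 :=
  ∑ l ∈ Finset.range n, (innerSL ℂ (ee l)).smulRight (ee l)

theorem proj_apply (n : ℕ) (x : l2) : proj n x = ∑ l ∈ Finset.range n, x l • ee l := by
  simp [proj, inner_ee_left]

theorem proj_apply_coord (n j : ℕ) (x : l2) : proj n x j = if j < n then x j else 0 := by
  have h : ∀ l, ⟪ee j, ee l⟫_ℂ = if j = l then 1 else 0 := orthonormal_iff_ite.1 orthonormal_ee j
  rw [← inner_ee_left, proj_apply, inner_sum]
  simp [inner_smul_right, h]

theorem proj_ee {n k : ℕ} (h : k < n) : proj n (ee k) = ee k := by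
  rw [proj_apply, Finset.sum_eq_single_of_mem k (Finset.mem_range.2 h) fun l _ hl => ?_,
    ← inner_ee_left, inner_self_eq_norm_sq_to_K, norm_ee]
  · simp
  · rw [← inner_ee_left, orthonormal_ee.2 hl, zero_smul]

theorem proj_mul_proj (n : ℕ) : proj n * proj n = proj n := by
  ext x j
  simp only [mul_apply_eq_comp, proj_apply_coord]
  split_ifs <;> rfl

theorem norm_sq_sum_smul_ee (x : ℕ → ℂ) (s : Finset ℕ) :
    ‖∑ l ∈ s, x l • ee l‖ ^ 2 = ∑ l ∈ s, ‖x l‖ ^ 2 := by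
  rw [← inner_self_eq_norm_sq (𝕜 := ℂ), orthonormal_ee.inner_sum]
  simp [Complex.conj_mul', ← Complex.ofReal_pow]

theorem norm_proj_le_one (n : ℕ) : ‖proj n‖ ≤ 1 := by
  refine (proj n).opNorm_le_bound zero_le_one fun x => ?_
  rw [one_mul, proj_apply]
  refine le_of_sq_le_sq ?_ (norm_nonneg _)
  rw [norm_sq_sum_smul_ee]
  exact sum_norm_sq_le x n

theorem ent_mul_proj_mul (A B : l2 →L[ℂ] l2) (n j k : ℕ) :
    ent (A * proj n * B) j k = ∑ l ∈ Finset.range n, ent A j l * ent B l k := by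
  rw [ent, mul_apply_eq_comp, mul_apply_eq_comp, proj_apply, map_sum,
    inner_sum]
  refine Finset.sum_congr rfl fun l _ => ?_
  rw [map_smul, inner_smul_right, mul_comm, ent_eq_apply B, ent]

theorem detP_mul_proj_mul (A B : l2 →L[ℂ] l2) (n : ℕ) :
    detP n (A * proj n * B) = detP n A * detP n B := by
  rw [detP, detP, detP, ← Matrix.det_mul]
  congr 1
  ext j k
  rw [Matrix.mul_apply]
  exact (ent_mul_proj_mul A B n j k).trans (Finset.sum_range _)

theorem detP_proj_mul_mul_proj (n : ℕ) (Z : l2 →L[ℂ] l2) :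
    detP n (proj n * Z * proj n) = detP n Z := by
  rw [detP, detP]
  congr 1
  ext j k
  simp [ent_eq_apply, proj_ee k.2, proj_apply_coord]

/-- The first `n` coordinates of a sequence, as a vector of Euclidean space. -/
def trunc (n : ℕ) (x : l2) : EuclideanSpace ℂ (Fin n) := WithLp.toLp 2 fun j => x j

theorem norm_trunc_le (n : ℕ) (x : l2) : ‖trunc n x‖ ≤ ‖x‖ := by
  refine le_of_sq_le_sq ?_ (norm_nonneg _)
  rw [EuclideanSpace.norm_sq_eq]
  exact (Finset.sum_range fun j => ‖x j‖ ^ 2).symm.trans_le (sum_norm_sq_le x n)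

theorem detP_eq_det_trunc (n : ℕ) (A : l2 →L[ℂ] l2) :
    detP n A =
      (EuclideanSpace.basisFun (Fin n) ℂ).toBasis.det fun k : Fin n => trunc n (A (ee k)) := by
  rw [detP, Module.Basis.det_apply]
  congr 1
  ext j k
  simp [Module.Basis.toMatrix_apply, trunc, ent_eq_apply]

theorem norm_detP_sub_le {X Y : l2 →L[ℂ] l2} (hX : ‖X‖ ≤ 1) (hY : ‖Y‖ ≤ 1) (n : ℕ) :
    ‖detP n X - detP n Y‖ ≤ ∑ k ∈ Finset.range n, ‖(X - Y) (ee k)‖ := by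
  have hcol {Z : l2 →L[ℂ] l2} (hZ : ‖Z‖ ≤ 1) (k : ℕ) : ‖trunc n (Z (ee k))‖ ≤ 1 :=
    (norm_trunc_le _ _).trans (Z.le_of_opNorm_le_of_le hZ (norm_ee k).le |>.trans_eq (one_mul 1))
  rw [detP_eq_det_trunc, detP_eq_det_trunc, Finset.sum_range]
  refine (norm_det_orthonormalBasis_sub_le _ (fun k => hcol hX k) fun k => hcol hY k).trans ?_
  gcongr with k
  exact norm_trunc_le n ((X - Y) (ee k))

/-! ### Hilbert–Schmidt bounds -/

/-- `HSBound E c` says that the Hilbert–Schmidt norm `(∑ₖ ‖E eₖ‖²)^{1/2}` of `E` is at most `c`. -/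
structure HSBound (E : l2 →L[ℂ] l2) (c : ℝ) : Prop where
  nonneg : 0 ≤ c
  sum_norm_sq_le : ∀ N : ℕ, ∑ k ∈ Finset.range N, ‖E (ee k)‖ ^ 2 ≤ c ^ 2

namespace HSBound

variable {E F B : l2 →L[ℂ] l2} {c d : ℝ}

theorem of_sum_sum_norm_ent_sq_le (hc : 0 ≤ c)
    (h : ∀ M N : ℕ, ∑ k ∈ Finset.range N, ∑ j ∈ Finset.range M, ‖ent E j k‖ ^ 2 ≤ c ^ 2) :
    HSBound E c where
  nonneg := hc
  sum_norm_sq_le N := by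
    have hcol (k : ℕ) : Tendsto (fun M => ∑ j ∈ Finset.range M, ‖ent E j k‖ ^ 2) atTop
        (nhds (‖E (ee k)‖ ^ 2)) := by
      simpa only [ent_eq_apply] using (hasSum_norm_sq (E (ee k))).tendsto_sum_nat
    exact le_of_tendsto' (tendsto_finsetSum _ fun k _ => hcol k) fun M => h M N

theorem sum_sum_norm_ent_sq_le (h : HSBound E c) (M N : ℕ) :
    ∑ k ∈ Finset.range N, ∑ j ∈ Finset.range M, ‖ent E j k‖ ^ 2 ≤ c ^ 2 := by
  refine (Finset.sum_le_sum fun k _ => ?_).trans (h.sum_norm_sq_le N)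
  simp only [ent_eq_apply]
  exact _root_.sum_norm_sq_le _ _

theorem of_norm_ent_le_mul {u v : ℕ → ℝ} (hc : 0 ≤ c) (h : ∀ j k, ‖ent E j k‖ ≤ u j * v k)
    (hu : ∀ M, ∑ j ∈ Finset.range M, u j ^ 2 ≤ c) (hv : ∀ M, ∑ j ∈ Finset.range M, v j ^ 2 ≤ c) :
    HSBound E c :=
  .of_sum_sum_norm_ent_sq_le hc fun M N => calc
    ∑ k ∈ Finset.range N, ∑ j ∈ Finset.range M, ‖ent E j k‖ ^ 2
      ≤ ∑ k ∈ Finset.range N, ∑ j ∈ Finset.range M, v k ^ 2 * u j ^ 2 := by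
        gcongr with k _ j
        rw [← mul_pow, mul_comm (v k)]
        gcongr
        exact h j k
    _ = (∑ k ∈ Finset.range N, v k ^ 2) * ∑ j ∈ Finset.range M, u j ^ 2 :=
        (Finset.sum_mul_sum _ _ _ _).symm
    _ ≤ c * c := mul_le_mul (hv N) (hu M) (Finset.sum_nonneg fun _ _ => sq_nonneg _) hc
    _ = c ^ 2 := (sq c).symm

theorem add (hE : HSBound E c) (hF : HSBound F d) : HSBound (E + F) (c + d) where
  nonneg := add_nonneg hE.nonneg hF.nonneg
  sum_norm_sq_le N := by
    have hcross : ∑ k ∈ Finset.range N, ‖E (ee k)‖ * ‖F (ee k)‖ ≤ c * d :=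
      (Real.sum_mul_le_sqrt_mul_sqrt _ _ _).trans (mul_le_mul
        (Real.sqrt_le_left hE.nonneg |>.2 (hE.sum_norm_sq_le N))
        (Real.sqrt_le_left hF.nonneg |>.2 (hF.sum_norm_sq_le N)) (Real.sqrt_nonneg _) hE.nonneg)
    calc ∑ k ∈ Finset.range N, ‖(E + F) (ee k)‖ ^ 2
        ≤ ∑ k ∈ Finset.range N, (‖E (ee k)‖ + ‖F (ee k)‖) ^ 2 := by
          gcongr with k
          exact norm_add_le _ _
      _ = ∑ k ∈ Finset.range N, ‖E (ee k)‖ ^ 2 + 2 * ∑ k ∈ Finset.range N, ‖E (ee k)‖ * ‖F (ee k)‖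
          + ∑ k ∈ Finset.range N, ‖F (ee k)‖ ^ 2 := by
          simp only [add_sq, Finset.sum_add_distrib, Finset.mul_sum, mul_assoc]
      _ ≤ (c + d) ^ 2 := by
          linarith [hE.sum_norm_sq_le N, hF.sum_norm_sq_le N, add_sq c d]

theorem mul_left (h : HSBound E c) (hB : ‖B‖ ≤ 1) : HSBound (B * E) c where
  nonneg := h.nonneg
  sum_norm_sq_le N := by
    refine le_trans ?_ (h.sum_norm_sq_le N)
    gcongr with k
    exact (B.le_of_opNorm_le hB _).trans_eq (one_mul _)

theorem adjoint (h : HSBound E c) : HSBound (ContinuousLinearMap.adjoint E) c :=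
  .of_sum_sum_norm_ent_sq_le h.nonneg fun M N => by
    rw [Finset.sum_comm]
    refine le_of_eq_of_le ?_ (h.sum_sum_norm_ent_sq_le N M)
    refine Finset.sum_congr rfl fun j _ => Finset.sum_congr rfl fun k _ => ?_
    rw [ent, ent, ContinuousLinearMap.adjoint_inner_right, ← inner_conj_symm, RCLike.norm_conj]

theorem mul_right (h : HSBound E c) (hB : ‖B‖ ≤ 1) : HSBound (E * B) c := by
  have hB' : ‖ContinuousLinearMap.adjoint B‖ ≤ 1 := by rwa [LinearIsometryEquiv.norm_map]
  simpa [ContinuousLinearMap.mul_def, ContinuousLinearMap.adjoint_comp] using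
    (h.adjoint.mul_left hB').adjoint

theorem sum_norm_le (h : HSBound E c) (n : ℕ) :
    ∑ k ∈ Finset.range n, ‖E (ee k)‖ ≤ √n * c := by
  refine le_of_sq_le_sq ?_ (mul_nonneg (Real.sqrt_nonneg _) h.nonneg)
  refine sq_sum_le_card_mul_sum_sq.trans ?_
  rw [mul_pow, Real.sq_sqrt (Nat.cast_nonneg n), Finset.card_range]
  gcongr
  exact h.sum_norm_sq_le n

end HSBound

/-! ### Hankel operators with positive semidefinite forms -/

/-- `IsHankel X c` says that `X` has the Hankel matrix `(c (j + k))`. In the convention of the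
theorem, `H(a)` is the case `c m = a_{m+1}`. -/
def IsHankel (X : l2 →L[ℂ] l2) (c : ℕ → ℝ) : Prop :=
  ∀ j k, ent X j k = c (j + k)

/-- The quadratic form of the `N × N` section of the Hankel matrix `(c (j + k))`. -/
def hankelForm (c : ℕ → ℝ) (N : ℕ) (x : ℕ → ℂ) : ℝ :=
  ∑ j ∈ Finset.range N, ∑ k ∈ Finset.range N, c (j + k) * (starRingEnd ℂ (x j) * x k).re

/-- The real sequences all of whose Hankel sections are positive semidefinite: they make `I + X`
bounded below whenever `IsHankel X c`. -/
def HankelNonneg (c : ℕ → ℝ) : Prop :=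
  ∀ (N : ℕ) (x : ℕ → ℂ), 0 ≤ hankelForm c N x

theorem HankelNonneg.alternating {c : ℕ → ℝ} (h : HankelNonneg c) :
    HankelNonneg fun m => (-1) ^ m * c m := fun N x => by
  refine (h N fun j => (-1) ^ j * x j).trans_eq ?_
  refine Finset.sum_congr rfl fun j _ => Finset.sum_congr rfl fun k _ => ?_
  have hsign : starRingEnd ℂ ((-1) ^ j * x j) * ((-1) ^ k * x k) =
      ((-1 : ℝ) ^ (j + k) : ℝ) * (starRingEnd ℂ (x j) * x k) := by
    simp only [map_mul, map_pow, map_neg, map_one, pow_add]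
    push_cast
    ring
  rw [hsign, Complex.re_ofReal_mul]
  ring

theorem HankelNonneg.add {c d : ℕ → ℝ} (hc : HankelNonneg c) (hd : HankelNonneg d) :
    HankelNonneg fun m => c m + d m := fun N x => by
  refine (add_nonneg (hc N x) (hd N x)).trans_eq ?_
  simp only [hankelForm, add_mul, Finset.sum_add_distrib]

namespace IsHankel

variable {A X Y : l2 →L[ℂ] l2} {c d u v : ℕ → ℝ}

theorem add (hX : IsHankel X c) (hY : IsHankel Y d) : IsHankel (X + Y) fun m => c m + d m :=
  fun j k => by rw [ent_add, hX, hY, Complex.ofReal_add]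

theorem sub (hX : IsHankel X c) (hY : IsHankel Y d) : IsHankel (X - Y) fun m => c m - d m :=
  fun j k => by rw [ent_sub, hX, hY, Complex.ofReal_sub]

theorem re_inner_sum_smul_ee (hX : IsHankel X c) (N : ℕ) (x : ℕ → ℂ) :
    (⟪∑ j ∈ Finset.range N, x j • ee j, X (∑ k ∈ Finset.range N, x k • ee k)⟫_ℂ).re =
      hankelForm c N x := by
  rw [map_sum, sum_inner, Complex.re_sum]
  refine Finset.sum_congr rfl fun j _ => ?_
  rw [inner_sum, Complex.re_sum]
  refine Finset.sum_congr rfl fun k _ => ?_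
  rw [map_smul, inner_smul_left, inner_smul_right, ← ent, hX, ← mul_assoc, mul_comm,
    Complex.re_ofReal_mul]

theorem re_inner_nonneg (hX : IsHankel X c) (hc : HankelNonneg c) (x : l2) :
    0 ≤ (⟪x, X x⟫_ℂ).re := by
  have hlim := (hasSum_smul_ee x).tendsto_sum_nat
  refine ge_of_tendsto' ((Complex.continuous_re.tendsto _).comp
    (hlim.inner (𝕜 := ℂ) ((X.continuous.tendsto _).comp hlim))) fun N => ?_
  exact (hc N x).trans_eq (hX.re_inner_sum_smul_ee N x).symm

theorem norm_sq_le_re_inner (hA : IsHankel (A - 1) c) (hc : HankelNonneg c) (x : l2) :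
    ‖x‖ ^ 2 ≤ (⟪x, A x⟫_ℂ).re := by
  have h := hA.re_inner_nonneg hc x
  rw [sub_apply, inner_sub_right, Complex.sub_re, one_apply_eq_self,
    ← RCLike.re_eq_complex_re, inner_self_eq_norm_sq] at h
  exact sub_nonneg.1 h

theorem isUnit (hA : IsHankel (A - 1) c) (hc : HankelNonneg c) : IsUnit A :=
  A.isUnit_of_forall_le_norm_inner_map (c := 1) one_pos fun x => by
    rw [NNReal.coe_one, mul_one, norm_inner_symm]
    exact (hA.norm_sq_le_re_inner hc x).trans (Complex.re_le_norm _)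

theorem norm_le_norm_apply (hA : IsHankel (A - 1) c) (hc : HankelNonneg c) (x : l2) :
    ‖x‖ ≤ ‖A x‖ := by
  rcases (norm_nonneg x).eq_or_lt with hx | hx
  · exact hx.symm.trans_le (norm_nonneg _)
  · refine le_of_mul_le_mul_left ?_ hx
    rw [← sq]
    exact (hA.norm_sq_le_re_inner hc x).trans
      ((Complex.re_le_norm _).trans (norm_inner_le_norm _ _))

theorem norm_inverse_le_one (hA : IsHankel (A - 1) c) (hc : HankelNonneg c) :
    ‖Ring.inverse A‖ ≤ 1 := by
  refine ContinuousLinearMap.opNorm_le_bound _ zero_le_one fun x => ?_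
  rw [one_mul]
  refine (hA.norm_le_norm_apply hc _).trans_eq ?_
  rw [← mul_apply_eq_comp, Ring.mul_inverse_cancel _ (hA.isUnit hc), one_apply_eq_self]

end IsHankel

/-! ### Hilbert–Schmidt bounds for Hankel operators -/

theorem neg_one_pow_mul_sum_Ico_mem_Icc {u : ℕ → ℝ} (hu : Antitone u) (hu0 : ∀ m, 0 ≤ u m)
    (d : ℕ) : ∀ n : ℕ,
      (-1) ^ n * ∑ l ∈ Finset.Ico n (n + d), (-1) ^ l * u l ∈ Set.Icc 0 (u n) := by
  induction d with
  | zero => intro n; simp [hu0]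
  | succ d ih =>
    intro n
    obtain ⟨hlow, hupp⟩ := ih (n + 1)
    have hhead : (-1 : ℝ) ^ n * ((-1) ^ n * u n) = u n := by
      rw [← mul_assoc, ← mul_pow, neg_one_mul, neg_neg, one_pow, one_mul]
    rw [Finset.sum_eq_sum_Ico_succ_bot (by omega), mul_add, hhead,
      show n + (d + 1) = n + 1 + d by ring]
    rw [pow_succ, mul_neg_one, neg_mul] at hlow hupp
    have hle : u (n + 1) ≤ u n := hu (Nat.le_succ n)
    exact ⟨by linarith, by linarith⟩

theorem abs_sum_Ico_alternating_le {u : ℕ → ℝ} (hu : Antitone u) (hu0 : ∀ m, 0 ≤ u m)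
    {n N : ℕ} (h : n ≤ N) : |∑ l ∈ Finset.Ico n N, (-1) ^ l * u l| ≤ u n := by
  obtain ⟨d, rfl⟩ := Nat.exists_eq_add_of_le h
  obtain ⟨hlow, hupp⟩ := neg_one_pow_mul_sum_Ico_mem_Icc hu hu0 d n
  rw [← abs_of_nonneg hlow, abs_mul, abs_pow, abs_neg, abs_one, one_pow, one_mul] at hupp
  exact hupp

section Bounds

variable {X Y : l2 →L[ℂ] l2} {c e u v : ℕ → ℝ} {σ τ ε S : ℝ}

theorem norm_ent_mul_sub_mul_proj_mul_le (hu : Antitone u) (hu0 : ∀ m, 0 ≤ u m)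
    (hv : Antitone v) (hv0 : ∀ m, 0 ≤ v m) (hσ : |σ| = 1) (hστ : σ * τ = -1)
    (hX : IsHankel X fun m => σ ^ m * u m) (hY : IsHankel Y fun m => τ ^ m * v m) (n j k : ℕ) :
    ‖ent (X * Y - X * proj n * Y) j k‖ ≤ u j * v k := by
  have hτ : |τ| = 1 := by simpa [hσ] using congrArg abs hστ
  have hterm (l : ℕ) : ent X j l * ent Y l k =
      (σ ^ j * τ ^ k * ((-1) ^ l * (u (j + l) * v (l + k))) : ℝ) := by
    rw [hX, hY, ← hστ, ← Complex.ofReal_mul]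
    congr 1
    ring
  have hanti : Antitone fun l => u (j + l) * v (l + k) := fun l m hlm =>
    mul_le_mul (hu (by omega)) (hv (by omega)) (hv0 _) (hu0 _)
  rw [ent_sub, ent_mul_proj_mul]
  refine le_of_tendsto ((hasSum_ent_mul X Y j k).tendsto_sum_nat.sub_const _).norm
    (eventually_atTop.2 ⟨n, fun N hN => ?_⟩)
  rw [← Finset.sum_Ico_eq_sub _ hN, Finset.sum_congr rfl fun l _ => hterm l, ← Complex.ofReal_sum,
    Complex.norm_real, ← Finset.mul_sum, Real.norm_eq_abs, abs_mul, abs_mul, abs_pow, abs_pow, hσ,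
    hτ, one_pow, one_pow, one_mul, one_mul]
  refine (abs_sum_Ico_alternating_le hanti (fun m => mul_nonneg (hu0 _) (hv0 _)) hN).trans ?_
  exact mul_le_mul (hu (by omega)) (hv (by omega)) (hv0 _) (hu0 _)

/-- The opposite signs of `X` and `Y` make the series for the entries of `X Y` alternate, so that
its tails are dominated by their first terms and inherit square summability. -/
theorem HSBound.mul_sub_mul_proj_mul (hu : Antitone u) (hu0 : ∀ m, 0 ≤ u m) (hv : Antitone v)
    (hv0 : ∀ m, 0 ≤ v m) (hσ : |σ| = 1) (hστ : σ * τ = -1)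
    (hX : IsHankel X fun m => σ ^ m * u m) (hY : IsHankel Y fun m => τ ^ m * v m)
    (huS : ∀ M, ∑ j ∈ Finset.range M, u j ^ 2 ≤ S) (hvS : ∀ M, ∑ j ∈ Finset.range M, v j ^ 2 ≤ S)
    (n : ℕ) : HSBound (X * Y - X * proj n * Y) S :=
  .of_norm_ent_le_mul (by simpa using huS 0)
    (norm_ent_mul_sub_mul_proj_mul_le hu hu0 hv hv0 hσ hστ hX hY n) huS hvS

theorem HSBound.of_isHankel_of_le_sub_succ (hX : IsHankel X e) (hε : 0 ≤ ε) (hc0 : ∀ m, 0 ≤ c m)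
    (hc : Antitone c) (hd : Antitone fun m => c m - c (m + 1))
    (he : ∀ m, |e m| ≤ ε * (c m - c (m + 1))) : HSBound X (ε * c 0) := by
  have hnonneg (m : ℕ) : 0 ≤ ε * (c m - c (m + 1)) :=
    mul_nonneg hε (sub_nonneg.2 (hc (Nat.le_succ m)))
  have hsum (M : ℕ) : ∑ j ∈ Finset.range M, √(ε * (c j - c (j + 1))) ^ 2 ≤ ε * c 0 := by
    simp only [Real.sq_sqrt (hnonneg _)]
    rw [← Finset.mul_sum, Finset.sum_range_sub']
    exact mul_le_mul_of_nonneg_left (by linarith [hc0 M]) hε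
  have hsqrt {l m : ℕ} (hlm : l ≤ m) : √(ε * (c m - c (m + 1))) ≤ √(ε * (c l - c (l + 1))) :=
    Real.sqrt_le_sqrt (mul_le_mul_of_nonneg_left (hd hlm) hε)
  refine .of_norm_ent_le_mul (mul_nonneg hε (hc0 0)) (fun j k => ?_) hsum hsum
  rw [hX, Complex.norm_real, Real.norm_eq_abs]
  refine (he _).trans ?_
  rw [← Real.mul_self_sqrt (hnonneg (j + k))]
  exact mul_le_mul (hsqrt (Nat.le_add_right j k)) (hsqrt (Nat.le_add_left k j))
    (Real.sqrt_nonneg _) (Real.sqrt_nonneg _)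

end Bounds

/-! ### Factorization of the determinant -/

section Factorization

variable {A A₁ A₂ B B₁ B₂ : l2 →L[ℂ] l2} {a b c d : ℕ → ℝ} {n : ℕ} {S T ε : ℝ}

theorem compression_sub_mul_compression {R : Type*} [Ring R] {A A₁ A₂ B B₁ B₂ P : R}
    (hP : P * P = P) (hBA : B * A = 1) (hAB₁ : A₁ * B₁ = 1) (hAB₂ : A₂ * B₂ = 1)
    (hBA₂ : B₂ * A₂ = 1) :
    P * (B - B₂ * P * B₁) * P =
      P * (B * (A₁ * A₂ - A) * (B₂ * B₁)) * P +
        P * (B₂ * ((A₂ - 1) * (A₁ - 1) - (A₂ - 1) * P * (A₁ - 1)) * B₁) * P := by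
  have hfac : B * (A₁ * A₂ - A) * (B₂ * B₁) = B - B₂ * B₁ := calc
    _ = B * (A₁ * (A₂ * B₂) * B₁) - B * A * (B₂ * B₁) := by noncomm_ring
    _ = B - B₂ * B₁ := by rw [hAB₂, mul_one, hAB₁, hBA, mul_one, one_mul]
  have htail : B₂ * ((A₂ - 1) * (A₁ - 1) - (A₂ - 1) * P * (A₁ - 1)) * B₁ =
      (1 - B₂) * (1 - P) * (1 - B₁) := calc
    _ = (B₂ * A₂ - B₂) * (1 - P) * (A₁ * B₁ - B₁) := by noncomm_ring
    _ = _ := by rw [hAB₁, hBA₂]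
  have hleft : P * (1 - P) = 0 := by rw [mul_sub, hP, mul_one, sub_self]
  have hright : (1 - P) * P = 0 := by rw [sub_mul, hP, one_mul, sub_self]
  rw [hfac, htail]
  calc P * (B - B₂ * P * B₁) * P
      = P * (B - B₂ * B₁) * P + (P * B₂ * (1 - P) * B₁ * P + P * (1 - P) * P
          - P * (1 - P) * B₁ * P - P * B₂ * ((1 - P) * P)) := by
        rw [hleft, hright]; noncomm_ring
    _ = P * (B - B₂ * B₁) * P + P * ((1 - B₂) * (1 - P) * (1 - B₁)) * P := by noncomm_ring

theorem norm_detP_sub_mul_le_of_HSBound (hBA : B * A = 1) (hAB₁ : A₁ * B₁ = 1)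
    (hAB₂ : A₂ * B₂ = 1) (hBA₂ : B₂ * A₂ = 1) (hB : ‖B‖ ≤ 1) (hB₁ : ‖B₁‖ ≤ 1) (hB₂ : ‖B₂‖ ≤ 1)
    (hS : HSBound (A₁ * A₂ - A) S)
    (hT : HSBound ((A₂ - 1) * (A₁ - 1) - (A₂ - 1) * proj n * (A₁ - 1)) T) :
    ‖detP n B - detP n B₁ * detP n B₂‖ ≤ √n * (S + T) := by
  have hmul {X Y : l2 →L[ℂ] l2} (hX : ‖X‖ ≤ 1) (hY : ‖Y‖ ≤ 1) : ‖X * Y‖ ≤ 1 :=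
    (norm_mul_le X Y).trans (mul_le_one₀ hX (norm_nonneg Y) hY)
  have hP := norm_proj_le_one n
  have hHS := (((hS.mul_left hB).mul_right (hmul hB₂ hB₁)).mul_left hP).mul_right hP |>.add
    ((((hT.mul_left hB₂).mul_right hB₁).mul_left hP).mul_right hP)
  rw [← compression_sub_mul_compression (proj_mul_proj n) hBA hAB₁ hAB₂ hBA₂, mul_sub,
    sub_mul] at hHS
  rw [mul_comm (detP n B₁), ← detP_mul_proj_mul, ← detP_proj_mul_mul_proj n B,
    ← detP_proj_mul_mul_proj n (B₂ * proj n * B₁)]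
  exact (norm_detP_sub_le (hmul (hmul hP hB) hP)
    (hmul (hmul hP (hmul (hmul hB₂ hP) hB₁)) hP) n).trans (hHS.sum_norm_le n)

theorem norm_detP_inverse_sub_mul_le (hA : IsHankel (A - 1) c) (hA₁ : IsHankel (A₁ - 1) b)
    (hA₂ : IsHankel (A₂ - 1) fun m => (-1) ^ m * a m)
    (hc : HankelNonneg c) (hbH : HankelNonneg b) (haH : HankelNonneg a)
    (ha : Antitone a) (ha0 : ∀ m, 0 ≤ a m) (hb : Antitone b) (hb0 : ∀ m, 0 ≤ b m)
    (haS : ∀ M, ∑ j ∈ Finset.range M, a j ^ 2 ≤ S) (hbS : ∀ M, ∑ j ∈ Finset.range M, b j ^ 2 ≤ S)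
    (hε : 0 ≤ ε) (hd0 : ∀ m, 0 ≤ d m) (hd : Antitone d)
    (hd' : Antitone fun m => d m - d (m + 1))
    (hcd : ∀ m, |b m + (-1) ^ m * a m - c m| ≤ ε * (d m - d (m + 1))) (n : ℕ) :
    ‖detP n (Ring.inverse A) - detP n (Ring.inverse A₁) * detP n (Ring.inverse A₂)‖ ≤
      √n * (2 * S + ε * d 0) := by
  have hb1 : IsHankel (A₁ - 1) fun m => 1 ^ m * b m := by simpa using hA₁
  have hprod : HSBound ((A₁ - 1) * (A₂ - 1)) S := by
    simpa [proj] using HSBound.mul_sub_mul_proj_mul hb hb0 ha ha0 abs_one (one_mul _) hb1 hA₂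
      hbS haS 0
  have htail := HSBound.mul_sub_mul_proj_mul ha ha0 hb hb0 (by simp) (mul_one _) hA₂ hb1 haS hbS n
  have hfac : HSBound (A₁ * A₂ - A) (S + ε * d 0) := by
    rw [show A₁ * A₂ - A = (A₁ - 1) * (A₂ - 1) + ((A₁ - 1) + (A₂ - 1) - (A - 1)) by noncomm_ring]
    exact hprod.add (.of_isHankel_of_le_sub_succ ((hA₁.add hA₂).sub hA) hε hd0 hd hd' hcd)
  have hu := hA.isUnit hc
  have hu₁ := hA₁.isUnit hbH
  have hu₂ := hA₂.isUnit haH.alternating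
  refine (norm_detP_sub_mul_le_of_HSBound (Ring.inverse_mul_cancel _ hu)
    (Ring.mul_inverse_cancel _ hu₁) (Ring.mul_inverse_cancel _ hu₂) (Ring.inverse_mul_cancel _ hu₂)
    (hA.norm_inverse_le_one hc) (hA₁.norm_inverse_le_one hbH)
    (hA₂.norm_inverse_le_one haH.alternating) hfac htail).trans_eq ?_
  ring

end Factorization

/-! ### Moment sequences -/

theorem HankelNonneg.const_mul {c : ℕ → ℝ} (h : HankelNonneg c) {r : ℝ} (hr : 0 ≤ r) :
    HankelNonneg fun m => r * c m := fun N x => by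
  simpa only [hankelForm, Finset.mul_sum, mul_assoc] using mul_nonneg hr (h N x)

theorem hankelNonneg_pow (s : ℝ) : HankelNonneg fun m => s ^ m := fun N x => by
  refine (Complex.normSq_nonneg (∑ k ∈ Finset.range N, ((s ^ k : ℝ) : ℂ) * x k)).trans_eq ?_
  rw [← Complex.ofReal_re (Complex.normSq _), Complex.normSq_eq_conj_mul_self, map_sum,
    Finset.sum_mul_sum, Complex.re_sum]
  refine Finset.sum_congr rfl fun j _ => ?_
  rw [Complex.re_sum]
  refine Finset.sum_congr rfl fun k _ => ?_
  rw [map_mul, Complex.conj_ofReal, mul_mul_mul_comm, ← Complex.ofReal_mul, ← pow_add,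
    Complex.re_ofReal_mul]

theorem HankelNonneg.intervalIntegral {c : ℝ → ℕ → ℝ} {a b : ℝ} (hab : a ≤ b)
    (hint : ∀ m, IntervalIntegrable (fun t => c t m) volume a b)
    (h : ∀ t ∈ Set.Ioo a b, HankelNonneg (c t)) : HankelNonneg fun m => ∫ t in a..b, c t m :=
  fun N x => by
  have hterm (j k : ℕ) :
      IntervalIntegrable (fun t => c t (j + k) * (starRingEnd ℂ (x j) * x k).re) volume a b :=
    (hint _).mul_const _
  have hrow (j : ℕ) : IntervalIntegrable
      (fun t => ∑ k ∈ Finset.range N, c t (j + k) * (starRingEnd ℂ (x j) * x k).re) volume a b := by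
    simpa only [Finset.sum_fn] using IntervalIntegrable.sum _ fun k _ => hterm j k
  have hform :
      hankelForm (fun m => ∫ t in a..b, c t m) N x = ∫ t in a..b, hankelForm (c t) N x := by
    simp only [hankelForm, intervalIntegral.integral_finsetSum fun j _ => hrow j,
      intervalIntegral.integral_finsetSum fun k _ => hterm _ k,
      intervalIntegral.integral_mul_const]
  rw [hform, intervalIntegral.integral_of_le hab, integral_Ioc_eq_integral_Ioo]
  exact setIntegral_nonneg measurableSet_Ioo fun t ht => h t ht N x

/-- The `m`-th moment `π⁻¹ ∫ s ^ m w ds` over `e^{-L} < s < 1`, in the variable `s = e^{-x}`. -/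
def expMoment (w : ℝ → ℝ) (L : ℝ) (m : ℕ) : ℝ :=
  1 / Real.pi * ∫ x in 0..L, w x * Real.exp (-x) ^ (m + 1)

section ExpMoment

variable {v w : ℝ → ℝ} {L ε : ℝ}

theorem intervalIntegrable_mul_exp_neg_pow (hw : IntervalIntegrable w volume 0 L) (m : ℕ) :
    IntervalIntegrable (fun x => w x * Real.exp (-x) ^ m) volume 0 L :=
  hw.mul_continuousOn (by fun_prop)

theorem intervalIntegrable_mul_one_sub_exp_neg (hw : IntervalIntegrable w volume 0 L) :
    IntervalIntegrable (fun x => w x * (1 - Real.exp (-x))) volume 0 L :=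
  hw.mul_continuousOn (by fun_prop)

theorem expMoment_mono (hL : 0 ≤ L) (hv : IntervalIntegrable v volume 0 L)
    (hw : IntervalIntegrable w volume 0 L) (h : ∀ x ∈ Set.Ioo 0 L, v x ≤ w x) (m : ℕ) :
    expMoment v L m ≤ expMoment w L m := by
  refine mul_le_mul_of_nonneg_left ?_ (by positivity)
  refine intervalIntegral.integral_mono_on_of_le_Ioo hL (intervalIntegrable_mul_exp_neg_pow hv _)
    (intervalIntegrable_mul_exp_neg_pow hw _) fun x hx => ?_
  exact mul_le_mul_of_nonneg_right (h x hx) (by positivity)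

theorem expMoment_sub (hv : IntervalIntegrable v volume 0 L)
    (hw : IntervalIntegrable w volume 0 L) (m : ℕ) :
    expMoment (fun x => v x - w x) L m = expMoment v L m - expMoment w L m := by
  simp only [expMoment, ← mul_sub, sub_mul]
  rw [intervalIntegral.integral_sub (intervalIntegrable_mul_exp_neg_pow hv _)
    (intervalIntegrable_mul_exp_neg_pow hw _)]

theorem expMoment_const_mul (r : ℝ) (m : ℕ) :
    expMoment (fun x => r * w x) L m = r * expMoment w L m := by
  simp only [expMoment, mul_assoc, intervalIntegral.integral_const_mul]
  ring

theorem expMoment_nonneg (hL : 0 ≤ L) (hw : IntervalIntegrable w volume 0 L)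
    (hw0 : ∀ x ∈ Set.Ioo 0 L, 0 ≤ w x) (m : ℕ) : 0 ≤ expMoment w L m := by
  simpa [expMoment] using expMoment_mono hL (v := fun _ => 0) (by simp) hw hw0 m

theorem expMoment_sub_succ (hw : IntervalIntegrable w volume 0 L) (m : ℕ) :
    expMoment w L m - expMoment w L (m + 1) =
      expMoment (fun x => w x * (1 - Real.exp (-x))) L m := by
  rw [expMoment, expMoment, expMoment, ← mul_sub, ← intervalIntegral.integral_sub
    (intervalIntegrable_mul_exp_neg_pow hw _) (intervalIntegrable_mul_exp_neg_pow hw _)]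
  congr 2
  funext x
  ring

theorem mul_one_sub_exp_neg_nonneg (hw0 : ∀ x ∈ Set.Ioo 0 L, 0 ≤ w x) {x : ℝ}
    (hx : x ∈ Set.Ioo 0 L) : 0 ≤ w x * (1 - Real.exp (-x)) :=
  mul_nonneg (hw0 x hx) (by simpa using hx.1.le)

theorem antitone_expMoment (hL : 0 ≤ L) (hw : IntervalIntegrable w volume 0 L)
    (hw0 : ∀ x ∈ Set.Ioo 0 L, 0 ≤ w x) : Antitone (expMoment w L) :=
  antitone_nat_of_succ_le fun m => by
    rw [← sub_nonneg, expMoment_sub_succ hw]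
    exact expMoment_nonneg hL (intervalIntegrable_mul_one_sub_exp_neg hw)
      (fun _ => mul_one_sub_exp_neg_nonneg hw0) m

theorem antitone_expMoment_sub_succ (hL : 0 ≤ L) (hw : IntervalIntegrable w volume 0 L)
    (hw0 : ∀ x ∈ Set.Ioo 0 L, 0 ≤ w x) :
    Antitone fun m => expMoment w L m - expMoment w L (m + 1) := by
  simp only [expMoment_sub_succ hw]
  exact antitone_expMoment hL (intervalIntegrable_mul_one_sub_exp_neg hw)
    fun _ => mul_one_sub_exp_neg_nonneg hw0

theorem abs_expMoment_sub_le (hL : 0 ≤ L) (hv : IntervalIntegrable v volume 0 L)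
    (hw : IntervalIntegrable w volume 0 L)
    (h : ∀ x ∈ Set.Ioo 0 L, |v x - w x| ≤ ε * (v x * (1 - Real.exp (-x)))) (m : ℕ) :
    |expMoment v L m - expMoment w L m| ≤ ε * (expMoment v L m - expMoment v L (m + 1)) := by
  have hint := (intervalIntegrable_mul_one_sub_exp_neg hv).const_mul ε
  rw [expMoment_sub_succ hv, ← expMoment_const_mul, ← expMoment_sub hv hw, abs_le', ← neg_one_mul,
    ← expMoment_const_mul]
  refine ⟨expMoment_mono hL (hv.sub hw) hint (fun x hx => (abs_le.1 (h x hx)).2) m,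
    expMoment_mono hL ((hv.sub hw).const_mul _) hint (fun x hx => ?_) m⟩
  rw [neg_one_mul, neg_le]
  exact (abs_le.1 (h x hx)).1

theorem hankelNonneg_expMoment (hL : 0 ≤ L) (hw : IntervalIntegrable w volume 0 L)
    (hw0 : ∀ x ∈ Set.Ioo 0 L, 0 ≤ w x) : HankelNonneg (expMoment w L) := by
  refine (HankelNonneg.intervalIntegral hL (fun m => intervalIntegrable_mul_exp_neg_pow hw (m + 1))
    fun x hx => ?_).const_mul (by positivity)
  have h := (hankelNonneg_pow (Real.exp (-x))).const_mul
    (mul_nonneg (hw0 x hx) (Real.exp_pos (-x)).le)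
  simpa only [pow_succ', mul_assoc] using h

end ExpMoment

/-! ### Moments of weights with an inverse square root singularity -/

theorem intervalIntegrable_inv_sqrt_abs_sub (L a b : ℝ) :
    IntervalIntegrable (fun x => (√|x - L|)⁻¹) volume a b := by
  have hzero {a b : ℝ} : IntervalIntegrable (fun x : ℝ => (√|x|)⁻¹) volume a b := by
    refine intervalIntegrable_of_even (fun x => by rw [abs_neg]) fun x hx => ?_
    refine (intervalIntegral.intervalIntegrable_rpow' (r := -(1 / 2)) (by norm_num)).congr
      fun t ht => ?_
    rw [Set.uIoc_of_le hx.le] at ht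
    rw [abs_of_pos ht.1, Real.rpow_neg ht.1.le, Real.sqrt_eq_rpow]
  simpa using (hzero (a := a - L) (b := b - L)).comp_sub_right L

section SqrtSingularity

variable {w : ℝ → ℝ} {L K : ℝ}

theorem integral_inv_sqrt_abs_sub (hL : 0 ≤ L) : ∫ x in 0..L, (√|x - L|)⁻¹ = 2 * √L := by
  have hcomp := intervalIntegral.integral_comp_sub_left (a := 0) (b := L)
    (fun x => x ^ (-(1 / 2) : ℝ)) L
  rw [sub_self, sub_zero, integral_rpow (Or.inl (by norm_num))] at hcomp
  rw [Real.sqrt_eq_rpow, intervalIntegral.integral_congr fun x hx => ?_, hcomp]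
  · norm_num
    ring
  · rw [Set.uIcc_of_le hL] at hx
    have hx0 : 0 ≤ L - x := sub_nonneg.2 hx.2
    simp only [abs_sub_comm x, abs_of_nonneg hx0, Real.rpow_neg hx0, Real.sqrt_eq_rpow]

theorem integral_exp_neg_pow_le (m : ℕ) :
    ∫ x in 0..L, Real.exp (-x) ^ (m + 1) ≤ 1 / (m + 1) := by
  have hderiv (x : ℝ) : HasDerivAt (fun x : ℝ => -(Real.exp (-x) ^ (m + 1) / ((m : ℝ) + 1)))
      (Real.exp (-x) ^ (m + 1)) x := by
    refine (((hasDerivAt_neg x).exp.pow (m + 1)).div_const ((m : ℝ) + 1)).neg.congr_deriv ?_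
    push_cast
    field_simp
    exact (pow_succ _ _).symm
  rw [intervalIntegral.integral_eq_sub_of_hasDerivAt (fun x _ => hderiv x)
    (Continuous.intervalIntegrable (by fun_prop) _ _)]
  have : 0 ≤ Real.exp (-L) ^ (m + 1) / ((m : ℝ) + 1) := by positivity
  simp only [neg_zero, Real.exp_zero, one_pow]
  linarith

theorem sqrt_div_sub_eq (hL : 0 ≤ L) {x : ℝ} (hx : x ≤ L) :
    √(L / (L - x)) = √L * (√|x - L|)⁻¹ := by
  rw [Real.sqrt_div hL, abs_sub_comm, abs_of_nonneg (sub_nonneg.2 hx), div_eq_mul_inv]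

theorem expMoment_le_mul_of_le_sqrt_div (hL : 0 ≤ L) (hK : 0 ≤ K)
    (hw : IntervalIntegrable w volume 0 L)
    (h : ∀ x ∈ Set.Ioo 0 L, w x ≤ K * √(L / (L - x))) (m : ℕ) : expMoment w L m ≤ K * L := by
  have hint : ∫ x in 0..L, w x * Real.exp (-x) ^ (m + 1) ≤ K * √L * (2 * √L) := by
    rw [← integral_inv_sqrt_abs_sub hL, ← intervalIntegral.integral_const_mul]
    refine intervalIntegral.integral_mono_on_of_le_Ioo hL (intervalIntegrable_mul_exp_neg_pow hw _)
      ((intervalIntegrable_inv_sqrt_abs_sub L 0 L).const_mul _) fun x hx => ?_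
    have hexp : Real.exp (-x) ^ (m + 1) ≤ 1 :=
      pow_le_one₀ (Real.exp_pos _).le (Real.exp_le_one_iff.2 (neg_nonpos.2 hx.1.le))
    have hwx := h x hx
    rw [sqrt_div_sub_eq hL hx.2.le, ← mul_assoc] at hwx
    calc w x * Real.exp (-x) ^ (m + 1)
        ≤ K * √L * (√|x - L|)⁻¹ * Real.exp (-x) ^ (m + 1) := by gcongr
      _ ≤ K * √L * (√|x - L|)⁻¹ := mul_le_of_le_one_right (by positivity) hexp
  calc expMoment w L m ≤ 1 / Real.pi * (K * √L * (2 * √L)) := by unfold expMoment; gcongr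
    _ = 2 / Real.pi * (K * L) := by
        rw [← Real.sq_sqrt hL, Real.sqrt_sq (Real.sqrt_nonneg L)]; ring
    _ ≤ K * L := mul_le_of_le_one_left (by positivity)
        ((div_le_one Real.pi_pos).2 Real.two_le_pi)

/-- Since `√L / √(L - x) ≤ 1 + x / (√L √(L - x))` and `x e^{-(m+1)x} ≤ 1 / (m + 1)`, the singularity
at `L` costs no more than a constant. -/
theorem sqrt_div_mul_exp_neg_pow_le {x : ℝ} (hx : x ∈ Set.Ioo 0 L) (m : ℕ) :
    √(L / (L - x)) * Real.exp (-x) ^ (m + 1) ≤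
      Real.exp (-x) ^ (m + 1) + 1 / ((m + 1) * √L) * (√|x - L|)⁻¹ := by
  have hL : 0 < L := hx.1.trans hx.2
  have hLx : 0 < L - x := sub_pos.2 hx.2
  have hsq : L ≤ √L * √(L - x) + x := by
    have hle : √(L - x) ≤ √L := Real.sqrt_le_sqrt (by linarith [hx.1])
    nlinarith [Real.sq_sqrt hLx.le, Real.sqrt_nonneg (L - x)]
  have hexp : x * Real.exp (-x) ^ (m + 1) ≤ 1 / (m + 1) := by
    rw [← Real.exp_nat_mul, mul_neg, Real.exp_neg, ← div_eq_mul_inv,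
      div_le_div_iff₀ (Real.exp_pos _) (by positivity)]
    push_cast
    linarith [Real.add_one_le_exp ((m + 1) * x)]
  have hdiv : √(L / (L - x)) ≤ 1 + x * (1 / √L * (√(L - x))⁻¹) := by
    rw [Real.sqrt_div hL.le]
    have h1 : 0 < √L := Real.sqrt_pos.2 hL
    have h2 : 0 < √(L - x) := Real.sqrt_pos.2 hLx
    rw [div_le_iff₀ h2]
    field_simp
    nlinarith [Real.sq_sqrt hL.le]
  rw [abs_sub_comm, abs_of_pos hLx]
  calc √(L / (L - x)) * Real.exp (-x) ^ (m + 1)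
      ≤ (1 + x * (1 / √L * (√(L - x))⁻¹)) * Real.exp (-x) ^ (m + 1) := by gcongr
    _ = Real.exp (-x) ^ (m + 1) +
          x * Real.exp (-x) ^ (m + 1) * (1 / √L * (√(L - x))⁻¹) := by ring
    _ ≤ Real.exp (-x) ^ (m + 1) + 1 / (m + 1) * (1 / √L * (√(L - x))⁻¹) := by gcongr
    _ = _ := by rw [← mul_assoc, one_div_mul_one_div]

theorem expMoment_le_div_of_le_sqrt_div (hL : 0 < L) (hK : 0 ≤ K)
    (hw : IntervalIntegrable w volume 0 L)
    (h : ∀ x ∈ Set.Ioo 0 L, w x ≤ K * √(L / (L - x))) (m : ℕ) :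
    expMoment w L m ≤ K / (m + 1) := by
  have hexpint : IntervalIntegrable (fun x => Real.exp (-x) ^ (m + 1)) volume 0 L :=
    Continuous.intervalIntegrable (by fun_prop) _ _
  have hsing := (intervalIntegrable_inv_sqrt_abs_sub L 0 L).const_mul (1 / ((m + 1) * √L))
  have hint : ∫ x in 0..L, w x * Real.exp (-x) ^ (m + 1) ≤ K * (3 / (m + 1)) := calc
    _ ≤ ∫ x in 0..L, K * (Real.exp (-x) ^ (m + 1) + 1 / ((m + 1) * √L) * (√|x - L|)⁻¹) := by
        refine intervalIntegral.integral_mono_on_of_le_Ioo hL.le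
          (intervalIntegrable_mul_exp_neg_pow hw _) ((hexpint.add hsing).const_mul K)
          fun x hx => ?_
        refine (mul_le_mul_of_nonneg_right (h x hx) (by positivity)).trans ?_
        rw [mul_assoc]
        exact mul_le_mul_of_nonneg_left (sqrt_div_mul_exp_neg_pow_le hx m) hK
    _ = K * ((∫ x in 0..L, Real.exp (-x) ^ (m + 1)) + 1 / ((m + 1) * √L) * (2 * √L)) := by
        rw [intervalIntegral.integral_const_mul, intervalIntegral.integral_add hexpint hsing,
          intervalIntegral.integral_const_mul, integral_inv_sqrt_abs_sub hL.le]
    _ ≤ K * (1 / (m + 1) + 1 / ((m + 1) * √L) * (2 * √L)) := by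
        gcongr
        exact integral_exp_neg_pow_le m
    _ = K * (3 / (m + 1)) := by
        have : √L ≠ 0 := (Real.sqrt_pos.2 hL).ne'
        field_simp
        norm_num
  calc expMoment w L m ≤ 1 / Real.pi * (K * (3 / (m + 1))) := by unfold expMoment; gcongr
    _ = 3 / Real.pi * (K / (m + 1)) := by ring
    _ ≤ K / (m + 1) := mul_le_of_le_one_left (by positivity)
        ((div_le_one Real.pi_pos).2 Real.pi_gt_three.le)

end SqrtSingularity

theorem sum_sq_le_of_le_mul_of_le_div {c : ℕ → ℝ} {C δ : ℝ} (hδ : 0 < δ) (hc : ∀ m, 0 ≤ c m)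
    (hsmall : ∀ m, c m ≤ C * δ) (hdecay : ∀ m : ℕ, c m ≤ C / (m + 1)) (M : ℕ) :
    ∑ m ∈ Finset.range M, c m ^ 2 ≤ 4 * C ^ 2 * δ := by
  have hδ' : 0 < 1 / δ := by positivity
  have hle (m : ℕ) : c m ≤ 2 * C / (m + 1 + 1 / δ) := by
    have h1 : c m * (m + 1) ≤ C := (le_div_iff₀ (by positivity)).1 (hdecay m)
    have h2 : c m * (1 / δ) ≤ C := by
      rw [mul_one_div]
      exact (div_le_iff₀ hδ).2 (hsmall m)
    rw [le_div_iff₀ (by positivity)]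
    linarith
  have htelescope (m : ℕ) : 1 / ((m : ℝ) + 1 + 1 / δ) ^ 2 ≤
      1 / ((m : ℝ) + 1 / δ) - 1 / (((m + 1 : ℕ) : ℝ) + 1 / δ) := by
    rw [div_sub_div _ _ (by positivity) (by positivity)]
    push_cast
    refine (div_le_div_iff₀ (by positivity) (by positivity)).2 ?_
    nlinarith [(Nat.cast_nonneg m : (0 : ℝ) ≤ m)]
  calc ∑ m ∈ Finset.range M, c m ^ 2
      ≤ ∑ m ∈ Finset.range M, 4 * C ^ 2 *
          (1 / ((m : ℝ) + 1 / δ) - 1 / (((m + 1 : ℕ) : ℝ) + 1 / δ)) := by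
        gcongr with m
        calc c m ^ 2 ≤ (2 * C / (m + 1 + 1 / δ)) ^ 2 := pow_le_pow_left₀ (hc m) (hle m) 2
          _ = 4 * C ^ 2 * (1 / (m + 1 + 1 / δ) ^ 2) := by rw [div_pow]; ring
          _ ≤ _ := mul_le_mul_of_nonneg_left (htelescope m) (by positivity)
    _ = 4 * C ^ 2 * (δ - 1 / ((M : ℝ) + 1 / δ)) := by
        rw [← Finset.mul_sum, Finset.sum_range_sub' fun m : ℕ => 1 / ((m : ℝ) + 1 / δ),
          Nat.cast_zero, zero_add, one_div_one_div]
    _ ≤ 4 * C ^ 2 * δ :=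
        mul_le_mul_of_nonneg_left (sub_le_self _ (by positivity)) (by positivity)

theorem sum_sq_expMoment_le_of_le_sqrt_div {w : ℝ → ℝ} {L K : ℝ} (hL : 0 < L) (hK : 0 ≤ K)
    (hw : IntervalIntegrable w volume 0 L) (hw0 : ∀ x ∈ Set.Ioo 0 L, 0 ≤ w x)
    (h : ∀ x ∈ Set.Ioo 0 L, w x ≤ K * √(L / (L - x))) (M : ℕ) :
    ∑ m ∈ Finset.range M, expMoment w L m ^ 2 ≤ 4 * K ^ 2 * L :=
  sum_sq_le_of_le_mul_of_le_div hL (expMoment_nonneg hL.le hw hw0)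
    (expMoment_le_mul_of_le_sqrt_div hL.le hK hw h) (expMoment_le_div_of_le_sqrt_div hL hK hw h) M

/-! ### Boundary values on a half strip -/

/-- `f` is holomorphic in the half strip `0 ≤ Re w`, `0 < Im w < π`, and extends continuously to the
two horizontal edges, up to a singularity of inverse square root type on the line `Re w = L`.
Composed with the logarithm, this is a function on the part `1 ≤ |z|` of the upper half plane,
with boundary values on the real axis. -/
structure IsHalfStripRegular (f : ℂ → ℂ) (L C : ℝ) : Prop where
  differentiableOn : DifferentiableOn ℂ f {w | 0 ≤ w.re ∧ w.im ∈ Set.Ioo 0 Real.pi}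
  continuousOn : ContinuousOn f {w | 0 ≤ w.re ∧ w.re ≠ L ∧ w.im ∈ Set.Icc 0 Real.pi}
  norm_le : ∀ w : ℂ, 0 ≤ w.re → w.re ≠ L → w.im ∈ Set.Icc 0 Real.pi →
    ‖f w‖ ≤ C * (1 + (√|w.re - L|)⁻¹)

namespace IsHalfStripRegular

variable {f : ℂ → ℂ} {L C R x y : ℝ}

theorem norm_add_mul_I_le (hf : IsHalfStripRegular f L C) (hx : 0 ≤ x) (hxL : x ≠ L)
    (hy : y ∈ Set.Icc 0 Real.pi) : ‖f (x + y * Complex.I)‖ ≤ C * (1 + (√|x - L|)⁻¹) := by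
  simpa using hf.norm_le (x + y * Complex.I) (by simpa using hx) (by simpa using hxL)
    (by simpa using hy)

theorem mul_of_norm_le_one {g : ℂ → ℂ} (hf : IsHalfStripRegular f L C)
    (hgd : DifferentiableOn ℂ g {w | 0 ≤ w.re ∧ w.im ∈ Set.Ioo 0 Real.pi})
    (hgc : ContinuousOn g {w | 0 ≤ w.re ∧ w.re ≠ L ∧ w.im ∈ Set.Icc 0 Real.pi})
    (hg : ∀ w, 0 ≤ w.re → w.im ∈ Set.Icc 0 Real.pi → ‖g w‖ ≤ 1) :
    IsHalfStripRegular (fun w => f w * g w) L C where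
  differentiableOn := hf.differentiableOn.mul hgd
  continuousOn := hf.continuousOn.mul hgc
  norm_le w hw hwL hwI := (norm_mul _ _).trans_le
    ((mul_le_of_le_one_right (norm_nonneg _) (hg w hw hwI)).trans (hf.norm_le w hw hwL hwI))

theorem mul_exp_neg (hf : IsHalfStripRegular f L C) (n : ℕ) :
    IsHalfStripRegular (fun w => f w * Complex.exp (-(n * w))) L C :=
  hf.mul_of_norm_le_one (Differentiable.differentiableOn (by fun_prop))
    (Continuous.continuousOn (by fun_prop)) fun w hw _ => by
      rw [Complex.norm_exp, Real.exp_le_one_iff]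
      simpa using mul_nonneg n.cast_nonneg hw

theorem const (L : ℝ) (c : ℂ) : IsHalfStripRegular (fun _ => c) L ‖c‖ where
  differentiableOn := differentiableOn_const c
  continuousOn := continuousOn_const
  norm_le _ _ _ _ := le_mul_of_one_le_right (norm_nonneg c) (le_add_of_nonneg_right (by positivity))

theorem sub {g : ℂ → ℂ} {D : ℝ} (hf : IsHalfStripRegular f L C) (hg : IsHalfStripRegular g L D) :
    IsHalfStripRegular (fun w => f w - g w) L (C + D) where
  differentiableOn := hf.differentiableOn.sub hg.differentiableOn
  continuousOn := hf.continuousOn.sub hg.continuousOn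
  norm_le w hw hwL hwI := by
    rw [add_mul]
    exact norm_sub_le_of_le (hf.norm_le w hw hwL hwI) (hg.norm_le w hw hwL hwI)

theorem continuousOn_vertical (hf : IsHalfStripRegular f L C) (hx : 0 ≤ x) (hxL : x ≠ L) :
    ContinuousOn (fun y : ℝ => f (x + y * Complex.I)) (Set.Icc 0 Real.pi) :=
  hf.continuousOn.comp (Continuous.continuousOn (by fun_prop))
    fun y hy => by simpa [hxL, hx] using hy

theorem continuousOn_horizontal (hf : IsHalfStripRegular f L C) (hy : y ∈ Set.Icc 0 Real.pi) :
    ContinuousOn (fun x : ℝ => f (x + y * Complex.I)) (Set.Ici 0 \ {L}) :=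
  hf.continuousOn.comp (Continuous.continuousOn (by fun_prop))
    fun x hx => by simpa using ⟨hx.1, hx.2, hy⟩

theorem aestronglyMeasurable_horizontal (hf : IsHalfStripRegular f L C) (hR : 0 ≤ R)
    (hy : y ∈ Set.Icc 0 Real.pi) :
    AEStronglyMeasurable (fun x : ℝ => f (x + y * Complex.I))
      (volume.restrict (Set.uIoc 0 R)) := by
  have hmeas := (hf.continuousOn_horizontal hy).aestronglyMeasurable (μ := volume)
    (measurableSet_Ici.diff (measurableSet_singleton L))
  rw [Measure.restrict_congr_set (sdiff_null_ae_eq_self (measure_singleton L))] at hmeas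
  rw [Set.uIoc_of_le hR]
  exact hmeas.mono_set fun x hx => hx.1.le

theorem ae_norm_horizontal_le (hf : IsHalfStripRegular f L C) (hR : 0 ≤ R)
    (hy : y ∈ Set.Icc 0 Real.pi) :
    ∀ᵐ x : ℝ, x ∈ Set.uIoc 0 R → ‖f (x + y * Complex.I)‖ ≤ C * (1 + (√|x - L|)⁻¹) := by
  filter_upwards [Measure.ae_ne volume L] with x hxL hx
  rw [Set.uIoc_of_le hR] at hx
  exact hf.norm_add_mul_I_le hx.1.le hxL hy

theorem intervalIntegrable_bound (L C R : ℝ) :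
    IntervalIntegrable (fun x => C * (1 + (√|x - L|)⁻¹)) volume 0 R :=
  (intervalIntegrable_const.add (intervalIntegrable_inv_sqrt_abs_sub L 0 R)).const_mul C

theorem intervalIntegrable_horizontal (hf : IsHalfStripRegular f L C) (hR : 0 ≤ R)
    (hy : y ∈ Set.Icc 0 Real.pi) :
    IntervalIntegrable (fun x : ℝ => f (x + y * Complex.I)) volume 0 R :=
  (intervalIntegrable_bound L C R).mono_fun' (hf.aestronglyMeasurable_horizontal hR hy)
    ((ae_restrict_iff' measurableSet_uIoc).2 (hf.ae_norm_horizontal_le hR hy))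

theorem continuousOn_integral_horizontal (hf : IsHalfStripRegular f L C) (hR : 0 ≤ R) :
    ContinuousOn (fun y : ℝ => ∫ x in 0..R, f (x + y * Complex.I)) (Set.Icc 0 Real.pi) :=
  fun y hy => by
  refine intervalIntegral.continuousWithinAt_of_dominated_interval
    (eventually_mem_nhdsWithin.mono fun t ht => hf.aestronglyMeasurable_horizontal hR ht)
    (eventually_mem_nhdsWithin.mono fun t ht => hf.ae_norm_horizontal_le hR ht)
    (intervalIntegrable_bound L C R) ?_
  filter_upwards [Measure.ae_ne volume L] with x hxL hx
  rw [Set.uIoc_of_le hR] at hx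
  exact hf.continuousOn_vertical hx.1.le hxL y hy

/-- Cauchy's theorem on `[0, R] × [0, π]`: the defect of the identity on `[0, R] × [0, b]` does not
depend on `b` in the open interval `(0, π)`, and is continuous on `[0, π]`. -/
theorem integral_horizontal_sub (hf : IsHalfStripRegular f L C) (hL : 0 ≠ L) (hR : 0 ≤ R)
    (hRL : R ≠ L) :
    (∫ x in 0..R, f (x + Real.pi * Complex.I)) - ∫ x in 0..R, f x =
      Complex.I * ((∫ y in 0..Real.pi, f (R + y * Complex.I)) -
        ∫ y in 0..Real.pi, f (y * Complex.I)) := by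
  have hvert {x : ℝ} (hx : 0 ≤ x) (hxL : x ≠ L) {b : ℝ} (hb : b ∈ Set.Icc 0 Real.pi) :
      IntervalIntegrable (fun y : ℝ => f (x + y * Complex.I)) volume 0 b :=
    ((hf.continuousOn_vertical hx hxL).mono (by
      rw [Set.uIcc_of_le hb.1]; exact Set.Icc_subset_Icc_right hb.2)).intervalIntegrable
  have hprim {x : ℝ} (hx : 0 ≤ x) (hxL : x ≠ L) :
      ContinuousOn (fun b => ∫ y in 0..b, f (x + y * Complex.I)) (Set.Icc 0 Real.pi) := by
    have hint := hvert hx hxL (Set.right_mem_Icc.2 Real.pi_pos.le)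
    simpa only [Set.uIcc_of_le Real.pi_pos.le] using
      intervalIntegral.continuousOn_primitive_interval' hint Set.left_mem_uIcc
  let defect : ℝ → ℂ := fun b => (∫ x in 0..R, f (x + b * Complex.I)) -
    Complex.I * ((∫ y in 0..b, f (R + y * Complex.I)) - ∫ y in 0..b, f ((0 : ℝ) + y * Complex.I))
  have hcont : ContinuousOn defect (Set.Icc 0 Real.pi) :=
    (hf.continuousOn_integral_horizontal hR).sub
      (continuousOn_const.mul ((hprim hR hRL).sub (hprim le_rfl hL)))
  have hconst {a b : ℝ} (ha : a ∈ Set.Ioo 0 Real.pi) (hb : b ∈ Set.Ioo 0 Real.pi) :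
      defect a = defect b := by
    have hrect := Complex.integral_boundary_rect_eq_zero_of_differentiableOn f ⟨0, a⟩ ⟨R, b⟩
      (hf.differentiableOn.mono fun w hw => ⟨?_, Set.ordConnected_Ioo.uIcc_subset ha hb hw.2⟩)
    · have hsub {x : ℝ} (hx : 0 ≤ x) (hxL : x ≠ L) := intervalIntegral.integral_interval_sub_left
        (hvert hx hxL (Set.Ioo_subset_Icc_self hb)) (hvert hx hxL (Set.Ioo_subset_Icc_self ha))
      simp only [smul_eq_mul, ← hsub hR hRL, ← hsub le_rfl hL] at hrect
      linear_combination hrect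
    · exact ((Set.uIcc_of_le hR).le hw.1).1
  have hmid : Real.pi / 2 ∈ Set.Ioo 0 Real.pi := ⟨Real.pi_div_two_pos, half_lt_self Real.pi_pos⟩
  have hEq : Set.EqOn defect (fun _ => defect (Real.pi / 2)) (Set.Icc 0 Real.pi) :=
    Set.EqOn.of_subset_closure (fun b hb => hconst hb hmid) hcont continuousOn_const
      Set.Ioo_subset_Icc_self (closure_Ioo Real.pi_pos.ne).ge
  have hends := (hEq (Set.right_mem_Icc.2 Real.pi_pos.le)).trans
    (hEq (Set.left_mem_Icc.2 Real.pi_pos.le)).symm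
  simp only [defect, Complex.ofReal_zero, zero_mul, add_zero, zero_add,
    intervalIntegral.integral_same, sub_zero, mul_zero] at hends
  linear_combination hends

theorem tendsto_integral_vertical_mul_exp_neg (hf : IsHalfStripRegular f L C) {n : ℕ}
    (hn : n ≠ 0) :
    Tendsto (fun R : ℝ => ∫ y in 0..Real.pi, f (R + y * Complex.I) *
      Complex.exp (-(n * (R + y * Complex.I)))) atTop (nhds 0) := by
  have hdecay : Tendsto (fun R : ℝ => |C| * 2 * Real.exp (-R) * |Real.pi - 0|) atTop (nhds 0) := by
    simpa using (Real.tendsto_exp_neg_atTop_nhds_zero.const_mul (|C| * 2)).mul_const |Real.pi - 0|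
  refine squeeze_zero_norm' ?_ hdecay
  filter_upwards [eventually_ge_atTop (max 0 (L + 1))] with R hR
  obtain ⟨hR0, hRL⟩ := max_le_iff.1 hR
  refine intervalIntegral.norm_integral_le_of_norm_le_const fun y hy => ?_
  rw [Set.uIoc_of_le Real.pi_pos.le] at hy
  have hsqrt : (√|R - L|)⁻¹ ≤ 1 :=
    inv_le_one_of_one_le₀ (Real.one_le_sqrt.2 (le_abs.2 (Or.inl (by linarith))))
  have hnorm : ‖f (R + y * Complex.I)‖ ≤ |C| * 2 :=
    (hf.norm_add_mul_I_le hR0 (by linarith) (Set.Ioc_subset_Icc_self hy)).trans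
      (mul_le_mul (le_abs_self C) (by linarith) (by positivity) (abs_nonneg C))
  have hexp : ‖Complex.exp (-(n * (R + y * Complex.I)))‖ ≤ Real.exp (-R) := by
    rw [Complex.norm_exp, Real.exp_le_exp]
    simpa using le_mul_of_one_le_left hR0 (by exact_mod_cast Nat.one_le_iff_ne_zero.2 hn)
  exact (norm_mul _ _).trans_le (mul_le_mul hnorm hexp (norm_nonneg _) (by positivity))

end IsHalfStripRegular

theorem im_intervalIntegral {b : ℝ → ℂ} {u v : ℝ} (hb : IntervalIntegrable b volume u v) :
    (∫ x in u..v, b x).im = ∫ x in u..v, (b x).im :=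
  (Complex.imCLM.intervalIntegral_comp_comm hb).symm

theorem intervalIntegrable_im {b : ℝ → ℂ} {u v : ℝ} (hb : IntervalIntegrable b volume u v) :
    IntervalIntegrable (fun x => (b x).im) volume u v :=
  ⟨hb.1.im, hb.2.im⟩

theorem im_integral_mul_exp_neg_eq_expMoment {b : ℝ → ℂ} {L R : ℝ} (hL : 0 ≤ L) (hR : L ≤ R)
    (hb : IntervalIntegrable b volume 0 R) (hb0 : ∀ x, L < x → (b x).im = 0) (m : ℕ) :
    (∫ x in 0..R, b x * Complex.exp (-((m + 1 : ℕ) * x))).im =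
      Real.pi * expMoment (fun x => (b x).im) L m := by
  have hexp (x : ℝ) : Complex.exp (-((m + 1 : ℕ) * x)) = (Real.exp (-x) ^ (m + 1) : ℝ) := by
    rw [← Real.exp_nat_mul]
    push_cast
    ring_nf
  have hint : IntervalIntegrable (fun x => b x * (Real.exp (-x) ^ (m + 1) : ℝ)) volume 0 R :=
    hb.mul_continuousOn (by fun_prop)
  have him := intervalIntegrable_im hint
  simp only [Complex.im_mul_ofReal] at him
  have hL' : L ∈ Set.uIcc 0 R := by rw [Set.uIcc_of_le (hL.trans hR)]; exact ⟨hL, hR⟩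
  have htail : ∫ x in L..R, (b x).im * Real.exp (-x) ^ (m + 1) = 0 :=
    intervalIntegral.integral_zero_ae (Eventually.of_forall fun x hx => by
      rw [hb0 x ((Set.uIoc_of_le hR).le hx).1, zero_mul])
  simp only [hexp, im_intervalIntegral hint, Complex.im_mul_ofReal]
  rw [← intervalIntegral.integral_add_adjacent_intervals
    (him.mono_set (Set.uIcc_subset_uIcc_left hL')) (him.mono_set (Set.uIcc_subset_uIcc_right hL')),
    htail, add_zero, expMoment]
  field_simp

theorem IsHalfStripRegular.re_integral_mul_exp_neg {f : ℂ → ℂ} {L C : ℝ}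
    (hf : IsHalfStripRegular f L C) (hL : 0 < L) (hbot : ∀ x : ℝ, L < x → (f x).im = 0)
    (htop : ∀ x : ℝ, L < x → (f (x + Real.pi * Complex.I)).im = 0) (m : ℕ) :
    (∫ y in 0..Real.pi, f (y * Complex.I) * Complex.exp (-((m + 1 : ℕ) * (y * Complex.I)))).re =
      Real.pi * (expMoment (fun x => (f x).im) L m +
        (-1) ^ m * expMoment (fun x => (f (x + Real.pi * Complex.I)).im) L m) := by
  have hexp (x : ℝ) : Complex.exp (-((m + 1 : ℕ) * (x + Real.pi * Complex.I))) =
      ((-1) ^ (m + 1) : ℝ) * Complex.exp (-((m + 1 : ℕ) * x)) := by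
    rw [mul_add, neg_add, add_comm, Complex.exp_add, ← mul_neg, Complex.exp_nat_mul,
      Complex.exp_neg, Complex.exp_pi_mul_I]
    norm_num
  have hcauchy : ∀ R > L,
      (∫ y in 0..Real.pi, f (y * Complex.I) * Complex.exp (-((m + 1 : ℕ) * (y * Complex.I)))).re -
        Real.pi * (expMoment (fun x => (f x).im) L m +
          (-1) ^ m * expMoment (fun x => (f (x + Real.pi * Complex.I)).im) L m) =
      (∫ y in 0..Real.pi, f (R + y * Complex.I) *
        Complex.exp (-((m + 1 : ℕ) * (R + y * Complex.I)))).re := fun R hR => by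
    have hR0 : 0 ≤ R := (hL.trans hR).le
    have h0 : IntervalIntegrable (fun x : ℝ => f x) volume 0 R := by
      simpa using hf.intervalIntegrable_horizontal hR0 (Set.left_mem_Icc.2 Real.pi_pos.le)
    have hπ := hf.intervalIntegrable_horizontal hR0 (Set.right_mem_Icc.2 Real.pi_pos.le)
    have h := congrArg Complex.im
      ((hf.mul_exp_neg (m + 1)).integral_horizontal_sub hL.ne hR0 hR.ne')
    simp only [hexp, mul_left_comm (f _), intervalIntegral.integral_const_mul] at h
    rw [Complex.sub_im, Complex.im_ofReal_mul, Complex.I_mul_im, Complex.sub_re,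
      im_integral_mul_exp_neg_eq_expMoment hL.le hR.le h0 hbot,
      im_integral_mul_exp_neg_eq_expMoment hL.le hR.le hπ htop] at h
    linear_combination h
  have hlim := (Complex.continuous_re.tendsto 0).comp
    (hf.tendsto_integral_vertical_mul_exp_neg m.succ_ne_zero)
  exact sub_eq_zero.1 (tendsto_nhds_unique (tendsto_const_nhds.congr'
    ((eventually_gt_atTop L).mono hcauchy)) hlim)

theorem integral_zero_two_mul_of_conj {H : ℝ → ℂ} {a : ℝ} (hH : IntervalIntegrable H volume 0 a)
    (hconj : ∀ᵐ x, x ∈ Set.uIoc 0 a → H (2 * a - x) = starRingEnd ℂ (H x)) :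
    ∫ x in 0..2 * a, H x = (2 * (∫ x in 0..a, H x).re : ℝ) := by
  have hreflect : IntervalIntegrable (fun x => H (2 * a - x)) volume 0 a := by
    refine IntervalIntegrable.congr_ae (f := fun x => starRingEnd ℂ (H x))
      ⟨(Complex.conjCLE : ℂ →L[ℝ] ℂ).integrable_comp hH.1,
        (Complex.conjCLE : ℂ →L[ℝ] ℂ).integrable_comp hH.2⟩ ?_
    exact (ae_restrict_iff' measurableSet_uIoc).2 (hconj.mono fun x h hx => (h hx).symm)
  have hright : IntervalIntegrable H volume a (2 * a) := by
    simpa [two_mul] using (hreflect.comp_sub_left (2 * a)).symm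
  have hintegral : ∫ x in a..2 * a, H x = starRingEnd ℂ (∫ x in 0..a, H x) := by
    have h := intervalIntegral.integral_comp_sub_left (a := 0) (b := a) H (2 * a)
    rw [sub_zero, two_mul, add_sub_cancel_right, ← two_mul] at h
    rw [← h, intervalIntegral.integral_congr_ae hconj]
    exact (Complex.conjCLE : ℂ →L[ℝ] ℂ).intervalIntegral_comp_comm hH
  rw [← intervalIntegral.integral_add_adjacent_intervals hH hright, hintegral, Complex.add_conj]

/-- The two halves of the circle contribute conjugate integrals, and the upper half is moved to the
real axis by Cauchy's theorem. -/
theorem IsHalfStripRegular.fc_eq {f : ℂ → ℂ} {L C : ℝ} (hf : IsHalfStripRegular f L C) (hL : 0 < L)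
    (hbot : ∀ x : ℝ, L < x → (f x).im = 0)
    (htop : ∀ x : ℝ, L < x → (f (x + Real.pi * Complex.I)).im = 0) {ψ : ℝ → ℂ}
    (hψ : ∀ θ ∈ Set.Ioo 0 Real.pi, ψ θ = f (θ * Complex.I))
    (hconj : ∀ θ ∈ Set.Ioo 0 Real.pi, ψ (2 * Real.pi - θ) = starRingEnd ℂ (ψ θ)) (m : ℕ) :
    fc ψ (m + 1) = (expMoment (fun x => (f x).im) L m +
      (-1) ^ m * expMoment (fun x => (f (x + Real.pi * Complex.I)).im) L m : ℝ) := by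
  have hIoo : ∀ᵐ θ : ℝ, θ ∈ Set.uIoc 0 Real.pi → θ ∈ Set.Ioo 0 Real.pi := by
    filter_upwards [Measure.ae_ne volume Real.pi] with θ hne hθ
    rw [Set.uIoc_of_le Real.pi_pos.le] at hθ
    exact ⟨hθ.1, hθ.2.lt_of_ne hne⟩
  have heq : ∀ᵐ θ : ℝ, θ ∈ Set.uIoc 0 Real.pi →
      f (θ * Complex.I) * Complex.exp (-((m + 1 : ℕ) * (θ * Complex.I))) =
        ψ θ * Complex.exp (-(Complex.I * ((m + 1 : ℤ) : ℂ) * θ)) :=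
    hIoo.mono fun θ h hθ => by
      rw [hψ θ (h hθ)]
      push_cast
      ring_nf
  have hint : IntervalIntegrable
      (fun θ : ℝ => f (θ * Complex.I) * Complex.exp (-((m + 1 : ℕ) * (θ * Complex.I))))
      volume 0 Real.pi := by
    have hcont := (hf.mul_exp_neg (m + 1)).continuousOn_vertical le_rfl hL.ne
    rw [← Set.uIcc_of_le Real.pi_pos.le] at hcont
    simpa using hcont.intervalIntegrable
  rw [fc, integral_zero_two_mul_of_conj
      (hint.congr_ae ((ae_restrict_iff' measurableSet_uIoc).2 heq)),
    ← intervalIntegral.integral_congr_ae heq, hf.re_integral_mul_exp_neg hL hbot htop,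
    ← Complex.ofReal_mul]
  · congr 1
    field_simp
  · filter_upwards [hIoo] with θ h hθ
    rw [hconj θ (h hθ), map_mul, ← Complex.exp_conj]
    congr 1
    exact Complex.exp_eq_exp_iff_exists_int.2 ⟨-(m + 1), by simp; ring⟩

/-! ### Square roots of real Möbius transformations -/

theorem cpow_inv_two_eq {z : ℂ} (hz : 0 ≤ z.im) :
    z ^ (2⁻¹ : ℂ) = √((‖z‖ + z.re) / 2) + √((‖z‖ - z.re) / 2) * Complex.I := by
  rw [← Complex.cpow_inv_two_re, ← Complex.cpow_inv_two_im_eq_sqrt hz, Complex.re_add_im]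

theorem continuousOn_cpow_inv_two : ContinuousOn (fun z : ℂ => z ^ (2⁻¹ : ℂ)) {z | 0 ≤ z.im} :=
  (Continuous.continuousOn (by fun_prop)).congr fun _ hz => cpow_inv_two_eq hz

theorem im_mobius (a b c d : ℝ) (z : ℂ) :
    ((a * z + b) / (c * z + d)).im = (a * d - b * c) * z.im / Complex.normSq (c * z + d) := by
  rw [Complex.div_im]
  simp
  ring

/-- The principal square root of the Möbius transformation with real coefficients `a`, `b`, `c`,
`d`; it maps the upper half plane to the first quadrant if `b * c < a * d`. -/
def sqrtMobius (a b c d : ℝ) (z : ℂ) : ℂ := ((a * z + b) / (c * z + d)) ^ (2⁻¹ : ℂ)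

section SqrtMobius

variable {a b c d : ℝ} {z : ℂ}

theorem sqrtMobius_sq (a b c d : ℝ) (z : ℂ) :
    sqrtMobius a b c d z ^ 2 = (a * z + b) / (c * z + d) :=
  Complex.cpow_ofNat_inv_pow _ 2

theorem norm_sqrtMobius (a b c d : ℝ) (z : ℂ) :
    ‖sqrtMobius a b c d z‖ = √(‖a * z + b‖ / ‖c * z + d‖) := by
  rw [← norm_div, ← sqrtMobius_sq, norm_pow, Real.sqrt_sq (norm_nonneg _)]

theorem im_mobius_nonneg (h : b * c < a * d) (hz : 0 ≤ z.im) :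
    0 ≤ ((a * z + b) / (c * z + d)).im := by
  rw [im_mobius]
  exact div_nonneg (mul_nonneg (sub_pos.2 h).le hz) (Complex.normSq_nonneg _)

theorem mul_add_ne_zero (h : b * c < a * d) (hz : 0 < z.im) : (c * z + d : ℂ) ≠ 0 := fun h0 => by
  have him : c * z.im = 0 := by simpa using congrArg Complex.im h0
  have hc : c = 0 := (mul_eq_zero.1 him).resolve_right hz.ne'
  have hd : d = 0 := by simpa [hc] using h0
  simp [hc, hd] at h

theorem im_mobius_pos (h : b * c < a * d) (hz : 0 < z.im) :
    0 < ((a * z + b) / (c * z + d)).im := by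
  rw [im_mobius]
  exact div_pos (mul_pos (sub_pos.2 h) hz) (Complex.normSq_pos.2 (mul_add_ne_zero h hz))

theorem re_sqrtMobius_pos (h : b * c < a * d) (hz : 0 < z.im) : 0 < (sqrtMobius a b c d z).re := by
  have hlt := Complex.abs_re_lt_norm.2 (im_mobius_pos h hz).ne'
  rw [sqrtMobius, Complex.cpow_inv_two_re]
  exact Real.sqrt_pos.2 (by linarith [(abs_lt.1 hlt).1])

theorem im_sqrtMobius_pos (h : b * c < a * d) (hz : 0 < z.im) : 0 < (sqrtMobius a b c d z).im := by
  have hlt := Complex.abs_re_lt_norm.2 (im_mobius_pos h hz).ne'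
  rw [sqrtMobius, Complex.cpow_inv_two_im_eq_sqrt (im_mobius_pos h hz).le]
  exact Real.sqrt_pos.2 (by linarith [(abs_lt.1 hlt).2])

theorem differentiableAt_sqrtMobius (h : b * c < a * d) (hz : 0 < z.im) :
    DifferentiableAt ℂ (sqrtMobius a b c d) z :=
  DifferentiableAt.cpow_const
    (DifferentiableAt.div (by fun_prop) (by fun_prop) (mul_add_ne_zero h hz))
    (Or.inr (im_mobius_pos h hz).ne')

theorem continuousOn_sqrtMobius (h : b * c < a * d) :
    ContinuousOn (sqrtMobius a b c d) {z | 0 ≤ z.im ∧ (c * z + d : ℂ) ≠ 0} :=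
  continuousOn_cpow_inv_two.comp
    (ContinuousOn.div (by fun_prop) (by fun_prop) fun _ hz => hz.2)
    fun _ hz => im_mobius_nonneg h hz.1

theorem sqrtMobius_ofReal (h : b * c < a * d) (t : ℝ) : sqrtMobius a b c d t =
    √((a * t + b) / (c * t + d)) + √(-((a * t + b) / (c * t + d))) * Complex.I := by
  have hreal : ((a * t + b) / (c * t + d) : ℂ) = ((a * t + b) / (c * t + d) : ℝ) := by
    push_cast
    rfl
  have hsqrt (s : ℝ) : √((|s| + s) / 2) = √s := by
    rcases le_total 0 s with hs | hs
    · rw [abs_of_nonneg hs, add_self_div_two]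
    · rw [abs_of_nonpos hs, neg_add_cancel, zero_div, Real.sqrt_zero,
        Real.sqrt_eq_zero_of_nonpos hs]
  have hneg := hsqrt (-((a * t + b) / (c * t + d)))
  rw [abs_neg, ← sub_eq_add_neg] at hneg
  rw [sqrtMobius, cpow_inv_two_eq (im_mobius_nonneg h (by simp)), hreal, Complex.norm_real,
    Complex.ofReal_re, Real.norm_eq_abs, hsqrt, hneg]

theorem im_sqrtMobius_ofReal (h : b * c < a * d) (t : ℝ) :
    (sqrtMobius a b c d t).im = √(-((a * t + b) / (c * t + d))) := by
  simp [sqrtMobius_ofReal h]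

end SqrtMobius

theorem exp_im_nonneg {w : ℂ} (hw : w.im ∈ Set.Icc 0 Real.pi) : 0 ≤ (Complex.exp w).im := by
  rw [Complex.exp_im]
  exact mul_nonneg (Real.exp_pos _).le (Real.sin_nonneg_of_mem_Icc hw)

theorem exp_im_pos {w : ℂ} (hw : w.im ∈ Set.Ioo 0 Real.pi) : 0 < (Complex.exp w).im := by
  rw [Complex.exp_im]
  exact mul_pos (Real.exp_pos _) (Real.sin_pos_of_mem_Ioo hw)

theorem one_le_norm_exp {w : ℂ} (hw : 0 ≤ w.re) : 1 ≤ ‖Complex.exp w‖ := by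
  rwa [Complex.norm_exp, Real.one_le_exp_iff]

theorem differentiableOn_sqrtMobius_exp {a b c d : ℝ} (h : b * c < a * d) :
    DifferentiableOn ℂ (fun w => sqrtMobius a b c d (Complex.exp w))
      {w | 0 ≤ w.re ∧ w.im ∈ Set.Ioo 0 Real.pi} := fun w hw =>
  ((differentiableAt_sqrtMobius h (exp_im_pos hw.2)).comp w
    Complex.differentiableAt_exp).differentiableWithinAt

theorem continuousOn_sqrtMobius_exp {a b c d L : ℝ} (h : b * c < a * d)
    (hd : ∀ w : ℂ, 0 ≤ w.re → w.re ≠ L → (c * Complex.exp w + d : ℂ) ≠ 0) :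
    ContinuousOn (fun w => sqrtMobius a b c d (Complex.exp w))
      {w | 0 ≤ w.re ∧ w.re ≠ L ∧ w.im ∈ Set.Icc 0 Real.pi} :=
  (continuousOn_sqrtMobius h).comp (Continuous.continuousOn (by fun_prop))
    fun w hw => ⟨exp_im_nonneg hw.2.2, hd w hw.1 hw.2.1⟩

/-! ### The symbols -/

/-- The symbol `ψ^{(1)}` of the paper as a function of the angle. -/
def psiOne (μ θ : ℝ) : ℂ :=
  uc (-(1 / 2)) ((Complex.exp (Complex.I * θ) - μ) / (1 - μ * Complex.exp (Complex.I * θ))) - 1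

/-- The symbol `ψ^{(-1)}` of the paper as a function of the angle. -/
def psiNegOne (μ θ : ℝ) : ℂ :=
  uc (1 / 2) ((-Complex.exp (Complex.I * θ) - μ) / (1 + μ * Complex.exp (Complex.I * θ))) - 1

/-- The Wiener–Hopf factor `c₊` of the paper. -/
def cPlus (μ : ℝ) (z : ℂ) : ℂ :=
  Complex.exp ((1 / 2 : ℂ) * Complex.log ((1 + μ * z) / (1 - μ * z)))

/-- The symbol `ψ_{α,n}` of the paper, with `μ` for `μ_{α,n}`, as a function of the angle. -/
def psi (μ θ : ℝ) : ℂ :=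
  cPlus μ (Complex.exp (-(Complex.I * θ))) * (cPlus μ (Complex.exp (Complex.I * θ)))⁻¹ * chi θ

/-- The function that continues `1 + psiOne μ` from the upper half circle to the upper half
plane. -/
def factorOne (μ : ℝ) : ℂ → ℂ := sqrtMobius μ (-1) 1 (-μ)

/-- The function that continues `1 + psiNegOne μ` from the upper half circle to the upper half
plane. -/
def factorNegOne (μ : ℝ) : ℂ → ℂ := sqrtMobius 1 μ μ 1

/-- The imaginary part of the boundary value of `factorOne μ` at `exp x`; it vanishes for
`-log μ < x`, as `√` is zero on negative reals. -/
def weightOne (μ x : ℝ) : ℝ := √((1 - μ * Real.exp x) / (Real.exp x - μ))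

/-- The imaginary part of the boundary value of `factorNegOne μ` at `-exp x`; it vanishes for
`-log μ < x`, as `√` is zero on negative reals. -/
def weightNegOne (μ x : ℝ) : ℝ := √((Real.exp x - μ) / (1 - μ * Real.exp x))

/-- The real value of `factorNegOne μ` at `exp x`, which is the inverse of the one of `factorOne μ`
at `-exp x`. -/
def weightRatio (μ x : ℝ) : ℝ := √((Real.exp x + μ) / (1 + μ * Real.exp x))

section Symbols

variable {μ : ℝ} {z : ℂ}

theorem factorOne_det (h0 : 0 < μ) (h1 : μ < 1) : -1 * 1 < μ * -μ := by nlinarith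

theorem factorNegOne_det (h0 : 0 < μ) (h1 : μ < 1) : μ * μ < 1 * 1 := by nlinarith

theorem neg_log_pos (h0 : 0 < μ) (h1 : μ < 1) : 0 < -Real.log μ :=
  neg_pos.2 (Real.log_neg h0 h1)

theorem weightOne_eq_zero (h0 : 0 < μ) (h1 : μ < 1) {x : ℝ} (hx : -Real.log μ < x) :
    weightOne μ x = 0 := by
  have hμx : 1 < μ * Real.exp x := by
    rw [← Real.exp_log h0, ← Real.exp_add, Real.one_lt_exp_iff]
    linarith
  exact Real.sqrt_eq_zero_of_nonpos
    (div_nonpos_of_nonpos_of_nonneg (by linarith) (by nlinarith [Real.exp_pos x]))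

theorem weightNegOne_eq_weightOne_inv (μ x : ℝ) : weightNegOne μ x = (weightOne μ x)⁻¹ := by
  rw [weightNegOne, weightOne, ← Real.sqrt_inv, inv_div]

theorem im_factorOne_exp (h0 : 0 < μ) (h1 : μ < 1) (x : ℝ) :
    (factorOne μ (Complex.exp x)).im = weightOne μ x := by
  rw [factorOne, ← Complex.ofReal_exp, im_sqrtMobius_ofReal (factorOne_det h0 h1), weightOne]
  congr 1
  ring

theorem factorOne_neg_exp (h0 : 0 < μ) (h1 : μ < 1) (x : ℝ) :
    factorOne μ (-Complex.exp x) = (weightRatio μ x)⁻¹ := by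
  have hvalue : (μ * -Real.exp x + -1) / (1 * -Real.exp x + -μ) =
      ((Real.exp x + μ) / (1 + μ * Real.exp x))⁻¹ := by
    rw [inv_div, ← neg_div_neg_eq]
    congr 1 <;> ring
  rw [← Complex.ofReal_exp, ← Complex.ofReal_neg, factorOne,
    sqrtMobius_ofReal (factorOne_det h0 h1), hvalue,
    Real.sqrt_eq_zero_of_nonpos (neg_nonpos.2 (by positivity)), weightRatio, Real.sqrt_inv]
  simp

theorem factorNegOne_exp (h0 : 0 < μ) (h1 : μ < 1) (x : ℝ) :
    factorNegOne μ (Complex.exp x) = weightRatio μ x := by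
  rw [factorNegOne, ← Complex.ofReal_exp, sqrtMobius_ofReal (factorNegOne_det h0 h1),
    Real.sqrt_eq_zero_of_nonpos (neg_nonpos.2 (by positivity)), weightRatio, one_mul,
    add_comm (μ * _)]
  simp

theorem im_factorNegOne_neg_exp (h0 : 0 < μ) (h1 : μ < 1) (x : ℝ) :
    (factorNegOne μ (-Complex.exp x)).im = weightNegOne μ x := by
  rw [← Complex.ofReal_exp, ← Complex.ofReal_neg, factorNegOne,
    im_sqrtMobius_ofReal (factorNegOne_det h0 h1), weightNegOne]
  congr 1
  ring

theorem norm_factorOne_le_one (h0 : 0 < μ) (h1 : μ < 1) (hz : 1 ≤ ‖z‖) : ‖factorOne μ z‖ ≤ 1 := by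
  have hsq : 1 ≤ z.re * z.re + z.im * z.im := by
    rw [← Complex.normSq_apply, Complex.normSq_eq_norm_sq]
    exact one_le_pow₀ hz
  rw [factorOne, norm_sqrtMobius, Real.sqrt_le_one]
  refine div_le_one_of_le₀ ?_ (norm_nonneg _)
  rw [← sq_le_sq₀ (norm_nonneg _) (norm_nonneg _), Complex.sq_norm, Complex.sq_norm,
    Complex.normSq_apply, Complex.normSq_apply]
  simp
  nlinarith [mul_nonneg (sub_nonneg.2 (mul_le_one₀ h1.le h0.le h1.le)) (sub_nonneg.2 hsq)]

theorem mul_abs_le_norm_one_add (h0 : 0 < μ) (h1 : μ < 1) {w : ℂ} (hw : 0 ≤ w.re) :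
    μ * |w.re - -Real.log μ| ≤ ‖1 + μ * Complex.exp w‖ := by
  have hexp : ‖μ * Complex.exp w‖ = Real.exp (w.re - -Real.log μ) := by
    rw [norm_mul, Complex.norm_of_nonneg h0.le, Complex.norm_exp, sub_neg_eq_add, Real.exp_add,
      Real.exp_log h0, mul_comm]
  have hlower : μ ≤ Real.exp (w.re - -Real.log μ) := by
    rw [sub_neg_eq_add, Real.exp_add, Real.exp_log h0]
    exact le_mul_of_one_le_left h0.le (Real.one_le_exp hw)
  have hnorm := abs_norm_sub_norm_le (μ * Complex.exp w) (-1)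
  rw [sub_neg_eq_add, add_comm _ (1 : ℂ), norm_neg, norm_one, hexp] at hnorm
  refine le_trans ?_ hnorm
  generalize w.re - -Real.log μ = t at hlower
  rcases le_total 0 t with ht | ht
  · rw [abs_of_nonneg ht]
    exact le_abs.2 (Or.inl (by nlinarith [Real.add_one_le_exp t]))
  · have hinv : Real.exp t * Real.exp (-t) = 1 := by
      rw [← Real.exp_add, add_neg_cancel, Real.exp_zero]
    rw [abs_of_nonpos ht]
    exact le_abs.2 (Or.inr (by nlinarith [Real.add_one_le_exp (-t), Real.exp_pos t]))

theorem one_add_mul_exp_ne_zero (h0 : 0 < μ) (h1 : μ < 1) {w : ℂ} (hw : 0 ≤ w.re)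
    (hwL : w.re ≠ -Real.log μ) : 1 + μ * Complex.exp w ≠ 0 :=
  norm_pos_iff.1 ((mul_pos h0 (abs_pos.2 (sub_ne_zero.2 hwL))).trans_le
    (mul_abs_le_norm_one_add h0 h1 hw))

theorem norm_factorNegOne_exp_le (h0 : 0 < μ) (h1 : μ < 1) {w : ℂ} (hw : 0 ≤ w.re)
    (hwL : w.re ≠ -Real.log μ) :
    ‖factorNegOne μ (Complex.exp w)‖ ≤ μ⁻¹ * (1 + (√|w.re - -Real.log μ|)⁻¹) := by
  have hden := norm_pos_iff.2 (one_add_mul_exp_ne_zero h0 h1 hw hwL)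
  have hlower := mul_abs_le_norm_one_add h0 h1 hw
  have hpos : 0 < |w.re - -Real.log μ| := abs_pos.2 (sub_ne_zero.2 hwL)
  have hnum : μ * ‖Complex.exp w + μ‖ ≤ ‖1 + μ * Complex.exp w‖ + 1 := by
    rw [← Complex.norm_of_nonneg h0.le, ← norm_mul, Complex.norm_of_nonneg h0.le,
      show μ * (Complex.exp w + μ) = 1 + μ * Complex.exp w - (1 - μ ^ 2 : ℝ) by push_cast; ring]
    refine norm_sub_le_of_le le_rfl ?_
    rw [Complex.norm_of_nonneg (by nlinarith)]
    nlinarith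
  have hμ : 1 ≤ μ⁻¹ := (one_le_inv₀ h0).2 h1.le
  rw [factorNegOne, norm_sqrtMobius, Complex.ofReal_one, one_mul, add_comm (μ * Complex.exp w),
    Real.sqrt_le_left (by positivity)]
  calc ‖Complex.exp w + μ‖ / ‖1 + μ * Complex.exp w‖
      ≤ μ⁻¹ * (‖1 + μ * Complex.exp w‖ + 1) / ‖1 + μ * Complex.exp w‖ := by
        gcongr
        rwa [← div_eq_inv_mul, le_div_iff₀' h0]
    _ = μ⁻¹ * (1 + ‖1 + μ * Complex.exp w‖⁻¹) := by field_simp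
    _ ≤ μ⁻¹ * (μ⁻¹ + (μ * |w.re - -Real.log μ|)⁻¹) := by gcongr
    _ = μ⁻¹ ^ 2 * (1 + (√|w.re - -Real.log μ|)⁻¹ ^ 2) := by
        rw [mul_inv, inv_pow, inv_pow, Real.sq_sqrt hpos.le]
        ring
    _ ≤ (μ⁻¹ * (1 + (√|w.re - -Real.log μ|)⁻¹)) ^ 2 := by
        rw [mul_pow]
        gcongr
        nlinarith [inv_nonneg.2 (Real.sqrt_nonneg |w.re - -Real.log μ|)]

theorem differentiableOn_factorOne_exp (h0 : 0 < μ) (h1 : μ < 1) :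
    DifferentiableOn ℂ (fun w => factorOne μ (Complex.exp w))
      {w | 0 ≤ w.re ∧ w.im ∈ Set.Ioo 0 Real.pi} :=
  differentiableOn_sqrtMobius_exp (factorOne_det h0 h1)

theorem continuousOn_factorOne_exp (h0 : 0 < μ) (h1 : μ < 1) :
    ContinuousOn (fun w => factorOne μ (Complex.exp w))
      {w | 0 ≤ w.re ∧ w.re ≠ -Real.log μ ∧ w.im ∈ Set.Icc 0 Real.pi} := by
  refine continuousOn_sqrtMobius_exp (factorOne_det h0 h1) fun w hw _ h => ?_
  rw [Complex.ofReal_one, one_mul, Complex.ofReal_neg, ← sub_eq_add_neg, sub_eq_zero] at h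
  have hnorm := one_le_norm_exp hw
  rw [h, Complex.norm_of_nonneg h0.le] at hnorm
  linarith

theorem isHalfStripRegular_factorOne (h0 : 0 < μ) (h1 : μ < 1) :
    IsHalfStripRegular (fun w => factorOne μ (Complex.exp w)) (-Real.log μ) 1 where
  differentiableOn := differentiableOn_factorOne_exp h0 h1
  continuousOn := continuousOn_factorOne_exp h0 h1
  norm_le _ hw _ _ := (norm_factorOne_le_one h0 h1 (one_le_norm_exp hw)).trans (by simp)

theorem isHalfStripRegular_factorNegOne (h0 : 0 < μ) (h1 : μ < 1) :
    IsHalfStripRegular (fun w => factorNegOne μ (Complex.exp w)) (-Real.log μ) μ⁻¹ where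
  differentiableOn := differentiableOn_sqrtMobius_exp (factorNegOne_det h0 h1)
  continuousOn := continuousOn_sqrtMobius_exp (factorNegOne_det h0 h1) fun w hw hwL => by
    simpa [add_comm] using one_add_mul_exp_ne_zero h0 h1 hw hwL
  norm_le _ hw hwL _ := norm_factorNegOne_exp_le h0 h1 hw hwL

theorem isHalfStripRegular_factorNegOne_mul_factorOne (h0 : 0 < μ) (h1 : μ < 1) :
    IsHalfStripRegular
      (fun w => factorNegOne μ (Complex.exp w) * factorOne μ (Complex.exp w)) (-Real.log μ) μ⁻¹ :=
  (isHalfStripRegular_factorNegOne h0 h1).mul_of_norm_le_one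
    (differentiableOn_factorOne_exp h0 h1) (continuousOn_factorOne_exp h0 h1)
    fun _ hw _ => norm_factorOne_le_one h0 h1 (one_le_norm_exp hw)

theorem uc_neg_half {t : ℂ} (ht : t.im ≠ 0) : uc (-(1 / 2)) t = (-t)⁻¹ ^ (2⁻¹ : ℂ) := by
  have him : (-t).im ≠ 0 := neg_ne_zero.2 ht
  rw [uc, Complex.cpow_def_of_ne_zero (inv_ne_zero fun h => him (by simp [h])),
    Complex.log_inv _ fun h => him (Complex.arg_eq_pi_iff.1 h).2]
  ring_nf

theorem uc_half {t : ℂ} (ht : t ≠ 0) : uc (1 / 2) t = (-t) ^ (2⁻¹ : ℂ) := by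
  rw [uc, Complex.cpow_def_of_ne_zero (neg_ne_zero.2 ht)]
  ring_nf

theorem uc_conj {β t : ℂ} (hβ : starRingEnd ℂ β = β) (ht : t.im ≠ 0) :
    uc β (starRingEnd ℂ t) = starRingEnd ℂ (uc β t) := by
  rw [uc, uc, ← Complex.exp_conj, map_mul, hβ, ← map_neg, Complex.log_conj _ fun h =>
    neg_ne_zero.2 ht (Complex.arg_eq_pi_iff.1 h).2]

theorem im_sub_div_one_sub_pos (h0 : 0 < μ) (h1 : μ < 1) (hz : 0 < z.im) :
    0 < ((z - μ) / (1 - μ * z)).im := by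
  have h := im_mobius_pos (a := 1) (b := -μ) (c := -μ) (d := 1) (by nlinarith) hz
  simpa [sub_eq_add_neg, add_comm] using h

theorem uc_neg_half_eq_factorOne (h0 : 0 < μ) (h1 : μ < 1) (hz : 0 < z.im) :
    uc (-(1 / 2)) ((z - μ) / (1 - μ * z)) = factorOne μ z := by
  rw [uc_neg_half (im_sub_div_one_sub_pos h0 h1 hz).ne', factorOne, sqrtMobius, ← neg_div, inv_div]
  congr 1
  rw [← neg_div_neg_eq]
  push_cast
  ring_nf

theorem im_neg_sub_div_one_add_neg (h0 : 0 < μ) (h1 : μ < 1) (hz : 0 < z.im) :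
    ((-z - μ) / (1 + μ * z)).im < 0 := by
  have h := im_mobius_pos (factorNegOne_det h0 h1) hz
  rw [← neg_pos, ← Complex.neg_im, ← neg_div]
  simpa [add_comm] using h

theorem uc_half_eq_factorNegOne (h0 : 0 < μ) (h1 : μ < 1) (hz : 0 < z.im) :
    uc (1 / 2) ((-z - μ) / (1 + μ * z)) = factorNegOne μ z := by
  have him := im_neg_sub_div_one_add_neg h0 h1 hz
  rw [uc_half fun h => by simp [h] at him, factorNegOne, sqrtMobius, ← neg_div]
  congr 1
  push_cast
  ring_nf

theorem exp_neg_I_mul (θ : ℝ) :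
    Complex.exp (-(Complex.I * θ)) = starRingEnd ℂ (Complex.exp (Complex.I * θ)) := by
  rw [← Complex.exp_conj]
  simp

theorem exp_I_mul_two_pi_sub (θ : ℝ) :
    Complex.exp (Complex.I * (2 * Real.pi - θ : ℝ)) =
      starRingEnd ℂ (Complex.exp (Complex.I * θ)) := by
  rw [← exp_neg_I_mul]
  exact Complex.exp_eq_exp_iff_exists_int.2 ⟨1, by push_cast; ring⟩

theorem im_exp_I_mul_pos {θ : ℝ} (hθ : θ ∈ Set.Ioo 0 Real.pi) :
    0 < (Complex.exp (Complex.I * θ)).im :=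
  exp_im_pos (by simpa using hθ)

theorem fc_psiOne (h0 : 0 < μ) (h1 : μ < 1) (m : ℕ) :
    fc (psiOne μ) (m + 1) = (expMoment (weightOne μ) (-Real.log μ) m : ℝ) := by
  rw [((isHalfStripRegular_factorOne h0 h1).sub (.const _ 1)).fc_eq (neg_log_pos h0 h1)]
  · simp [im_factorOne_exp h0 h1, factorOne_neg_exp h0 h1, expMoment]
  · intro x hx
    simp [im_factorOne_exp h0 h1, weightOne_eq_zero h0 h1 hx]
  · intro x _
    simp [factorOne_neg_exp h0 h1]
  · intro θ hθ
    rw [psiOne, uc_neg_half_eq_factorOne h0 h1 (im_exp_I_mul_pos hθ), mul_comm]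
  · intro θ hθ
    rw [psiOne, psiOne, exp_I_mul_two_pi_sub, map_sub, map_one,
      ← uc_conj (by simp [Complex.conj_ofNat])
        (im_sub_div_one_sub_pos h0 h1 (im_exp_I_mul_pos hθ)).ne']
    simp

theorem fc_psiNegOne (h0 : 0 < μ) (h1 : μ < 1) (m : ℕ) :
    fc (psiNegOne μ) (m + 1) =
      ((-1) ^ m * expMoment (weightNegOne μ) (-Real.log μ) m : ℝ) := by
  rw [((isHalfStripRegular_factorNegOne h0 h1).sub (.const _ 1)).fc_eq (neg_log_pos h0 h1)]
  · simp [im_factorNegOne_neg_exp h0 h1, factorNegOne_exp h0 h1, expMoment]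
  · intro x _
    simp [factorNegOne_exp h0 h1]
  · intro x hx
    simp [im_factorNegOne_neg_exp h0 h1, weightNegOne_eq_weightOne_inv,
      weightOne_eq_zero h0 h1 hx]
  · intro θ hθ
    rw [psiNegOne, uc_half_eq_factorNegOne h0 h1 (im_exp_I_mul_pos hθ), mul_comm]
  · intro θ hθ
    rw [psiNegOne, psiNegOne, exp_I_mul_two_pi_sub, map_sub, map_one,
      ← uc_conj (by simp [Complex.conj_ofNat])
        (im_neg_sub_div_one_add_neg h0 h1 (im_exp_I_mul_pos hθ)).ne]
    simp

theorem re_one_add_div_one_sub_pos {u : ℂ} (hu : ‖u‖ < 1) : 0 < ((1 + u) / (1 - u)).re := by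
  have hne : 1 - u ≠ 0 := fun h => by simp [← sub_eq_zero.1 h] at hu
  have hsq : u.re * u.re + u.im * u.im < 1 := by
    rw [← Complex.normSq_apply, Complex.normSq_eq_norm_sq]
    exact pow_lt_one₀ (norm_nonneg u) hu two_ne_zero
  rw [Complex.div_re, ← add_div]
  refine div_pos ?_ (Complex.normSq_pos.2 hne)
  simp
  linarith

theorem norm_mul_lt_one (h0 : 0 < μ) (h1 : μ < 1) (hz : ‖z‖ = 1) : ‖μ * z‖ < 1 := by
  rwa [norm_mul, hz, mul_one, Complex.norm_of_nonneg h0.le]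

theorem cPlus_conj (h0 : 0 < μ) (h1 : μ < 1) (hz : ‖z‖ = 1) :
    cPlus μ (starRingEnd ℂ z) = starRingEnd ℂ (cPlus μ z) := by
  have hre := re_one_add_div_one_sub_pos (norm_mul_lt_one h0 h1 hz)
  rw [cPlus, cPlus, ← Complex.exp_conj, map_mul,
    ← Complex.log_conj _ (Complex.arg_lt_pi_iff.2 (Or.inl hre.le)).ne]
  simp [Complex.conj_ofNat]

theorem cPlus_sq (h0 : 0 < μ) (h1 : μ < 1) (hz : ‖z‖ = 1) :
    cPlus μ z ^ 2 = (1 + μ * z) / (1 - μ * z) := by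
  have hre := re_one_add_div_one_sub_pos (norm_mul_lt_one h0 h1 hz)
  rw [cPlus, ← Complex.exp_nat_mul, ← mul_assoc]
  norm_num
  exact Complex.exp_log fun h => by simp [h] at hre

theorem im_cPlus_conj_mul_inv_mul_I_pos (h0 : 0 < μ) (h1 : μ < 1) (hz : ‖z‖ = 1) :
    0 < (cPlus μ (starRingEnd ℂ z) * (cPlus μ z)⁻¹ * Complex.I).im := by
  have hre := re_one_add_div_one_sub_pos (norm_mul_lt_one h0 h1 hz)
  have hprod : starRingEnd ℂ (cPlus μ z) * (cPlus μ z)⁻¹ =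
      starRingEnd ℂ (cPlus μ z ^ 2) * ((Complex.normSq (cPlus μ z))⁻¹ : ℝ) := by
    rw [Complex.inv_def, map_pow]
    ring
  rw [cPlus_conj h0 h1 hz, hprod, Complex.mul_I_im, Complex.re_mul_ofReal, Complex.conj_re,
    cPlus_sq h0 h1 hz]
  exact mul_pos hre (inv_pos.2 (Complex.normSq_pos.2 (Complex.exp_ne_zero _)))

theorem sq_cPlus_conj_mul_inv_mul_I (h0 : 0 < μ) (h1 : μ < 1) (hz : ‖z‖ = 1) :
    (cPlus μ (starRingEnd ℂ z) * (cPlus μ z)⁻¹ * Complex.I) ^ 2 =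
      (factorNegOne μ z * factorOne μ z) ^ 2 := by
  have hz0 : z ≠ 0 := norm_ne_zero_iff.1 (by rw [hz]; exact one_ne_zero)
  have hconj : starRingEnd ℂ z = z⁻¹ := by
    rw [Complex.inv_def, Complex.normSq_eq_norm_sq, hz]
    simp
  have hmobius : (1 + μ * z⁻¹) / (1 - μ * z⁻¹) = (z + μ) / (z - μ) := by
    field_simp
  rw [mul_pow, mul_pow, mul_pow, inv_pow, cPlus_sq h0 h1 hz,
    cPlus_sq h0 h1 (by rwa [RCLike.norm_conj]), hconj, hmobius, factorNegOne, factorOne,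
    sqrtMobius_sq, sqrtMobius_sq, Complex.I_sq, inv_div, div_mul_div_comm, div_mul_div_comm]
  push_cast
  rw [mul_neg_one, ← neg_div]
  congr 1 <;> ring

theorem im_factorNegOne_mul_factorOne_pos (h0 : 0 < μ) (h1 : μ < 1) (hz : 0 < z.im) :
    0 < (factorNegOne μ z * factorOne μ z).im := by
  rw [Complex.mul_im]
  exact add_pos
    (mul_pos (re_sqrtMobius_pos (factorNegOne_det h0 h1) hz)
      (im_sqrtMobius_pos (factorOne_det h0 h1) hz))
    (mul_pos (im_sqrtMobius_pos (factorNegOne_det h0 h1) hz)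
      (re_sqrtMobius_pos (factorOne_det h0 h1) hz))

theorem cPlus_conj_mul_inv_mul_I (h0 : 0 < μ) (h1 : μ < 1) (hz : ‖z‖ = 1) (hzI : 0 < z.im) :
    cPlus μ (starRingEnd ℂ z) * (cPlus μ z)⁻¹ * Complex.I = factorNegOne μ z * factorOne μ z := by
  refine (sq_eq_sq_iff_eq_or_eq_neg.1 (sq_cPlus_conj_mul_inv_mul_I h0 h1 hz)).resolve_right
    fun h => ?_
  have him := im_cPlus_conj_mul_inv_mul_I_pos h0 h1 hz
  rw [h, Complex.neg_im] at him
  linarith [im_factorNegOne_mul_factorOne_pos h0 h1 hzI]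

theorem norm_exp_I_mul (θ : ℝ) : ‖Complex.exp (Complex.I * θ)‖ = 1 := by
  rw [mul_comm, Complex.norm_exp_ofReal_mul_I]

theorem psi_eq (h0 : 0 < μ) (h1 : μ < 1) {θ : ℝ} (hθ : θ ∈ Set.Ioo 0 Real.pi) :
    psi μ θ =
      factorNegOne μ (Complex.exp (Complex.I * θ)) * factorOne μ (Complex.exp (Complex.I * θ)) := by
  rw [psi, chi, if_pos (Real.sin_pos_of_mem_Ioo hθ), exp_neg_I_mul,
    cPlus_conj_mul_inv_mul_I h0 h1 (norm_exp_I_mul θ) (im_exp_I_mul_pos hθ)]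

theorem psi_two_pi_sub (h0 : 0 < μ) (h1 : μ < 1) {θ : ℝ} (hθ : θ ∈ Set.Ioo 0 Real.pi) :
    psi μ (2 * Real.pi - θ) = starRingEnd ℂ (psi μ θ) := by
  have hsin := Real.sin_pos_of_mem_Ioo hθ
  rw [psi, psi, chi, chi, if_pos hsin, Real.sin_two_pi_sub, if_neg (by linarith), exp_neg_I_mul,
    exp_neg_I_mul, exp_I_mul_two_pi_sub, Complex.conj_conj, cPlus_conj h0 h1 (norm_exp_I_mul θ)]
  simp only [map_mul, map_inv₀, Complex.conj_I, Complex.conj_conj]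

theorem fc_psi (h0 : 0 < μ) (h1 : μ < 1) (m : ℕ) :
    fc (psi μ) (m + 1) =
      (expMoment (fun x => weightRatio μ x * weightOne μ x) (-Real.log μ) m +
        (-1) ^ m * expMoment (fun x => weightNegOne μ x * (weightRatio μ x)⁻¹) (-Real.log μ) m
        : ℝ) := by
  rw [(isHalfStripRegular_factorNegOne_mul_factorOne h0 h1).fc_eq (neg_log_pos h0 h1)]
  · simp [im_factorOne_exp h0 h1, factorOne_neg_exp h0 h1, factorNegOne_exp h0 h1,
      im_factorNegOne_neg_exp h0 h1]
  · intro x hx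
    simp [im_factorOne_exp h0 h1, factorNegOne_exp h0 h1, weightOne_eq_zero h0 h1 hx]
  · intro x hx
    simp [factorOne_neg_exp h0 h1, im_factorNegOne_neg_exp h0 h1, weightNegOne_eq_weightOne_inv,
      weightOne_eq_zero h0 h1 hx]
  · intro θ hθ
    rw [psi_eq h0 h1 hθ, mul_comm Complex.I]
  · exact fun θ hθ => psi_two_pi_sub h0 h1 hθ

end Symbols

/-! ### Estimates for the weights -/

section Weights

variable {μ x : ℝ}

theorem weightOne_nonneg (μ x : ℝ) : 0 ≤ weightOne μ x := Real.sqrt_nonneg _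

theorem weightNegOne_nonneg (μ x : ℝ) : 0 ≤ weightNegOne μ x := Real.sqrt_nonneg _

theorem weightRatio_pos (h0 : 0 < μ) (x : ℝ) : 0 < weightRatio μ x :=
  Real.sqrt_pos.2 (by positivity)

theorem mul_exp_lt_one (h0 : 0 < μ) (hx : x < -Real.log μ) : μ * Real.exp x < 1 := by
  nth_rw 1 [← Real.exp_log h0]
  rw [← Real.exp_add, Real.exp_lt_one_iff]
  linarith

theorem continuous_weightRatio (h0 : 0 < μ) : Continuous (weightRatio μ) := by
  unfold weightRatio
  refine Continuous.sqrt (Continuous.div (by fun_prop) (by fun_prop) fun x => ?_)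
  positivity

theorem intervalIntegrable_weightOne (h0 : 0 < μ) (h1 : μ < 1) :
    IntervalIntegrable (weightOne μ) volume 0 (-Real.log μ) := by
  have h := intervalIntegrable_im
    ((isHalfStripRegular_factorOne h0 h1).intervalIntegrable_horizontal
      (neg_log_pos h0 h1).le (Set.left_mem_Icc.2 Real.pi_pos.le))
  simpa [im_factorOne_exp h0 h1] using h

theorem intervalIntegrable_weightNegOne (h0 : 0 < μ) (h1 : μ < 1) :
    IntervalIntegrable (weightNegOne μ) volume 0 (-Real.log μ) := by
  have h := intervalIntegrable_im
    ((isHalfStripRegular_factorNegOne h0 h1).intervalIntegrable_horizontal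
      (neg_log_pos h0 h1).le (Set.right_mem_Icc.2 Real.pi_pos.le))
  simpa [Complex.exp_add, im_factorNegOne_neg_exp h0 h1] using h

theorem intervalIntegrable_weightRatio_mul_weightOne (h0 : 0 < μ) (h1 : μ < 1) :
    IntervalIntegrable (fun x => weightRatio μ x * weightOne μ x) volume 0 (-Real.log μ) :=
  (intervalIntegrable_weightOne h0 h1).continuousOn_mul (continuous_weightRatio h0).continuousOn

theorem intervalIntegrable_weightNegOne_mul_weightRatio_inv (h0 : 0 < μ) (h1 : μ < 1) :
    IntervalIntegrable (fun x => weightNegOne μ x * (weightRatio μ x)⁻¹) volume 0 (-Real.log μ) :=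
  (intervalIntegrable_weightNegOne h0 h1).mul_continuousOn
    ((continuous_weightRatio h0).inv₀ fun x => (weightRatio_pos h0 x).ne').continuousOn

theorem one_le_weightRatio (h0 : 0 < μ) (h1 : μ < 1) (hx : 0 ≤ x) : 1 ≤ weightRatio μ x := by
  have hexp := Real.one_le_exp hx
  rw [weightRatio, Real.one_le_sqrt, one_le_div (by positivity)]
  nlinarith

theorem weightRatio_sub_one_le (h0 : 1 / 2 ≤ μ) (h1 : μ < 1) (hx : x ∈ Set.Ioo 0 (-Real.log μ)) :
    weightRatio μ x - 1 ≤ (1 - μ) * (1 - Real.exp (-x)) := by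
  have hμ : 0 < μ := by linarith
  have hexp := Real.one_lt_exp_iff.2 hx.1
  have hlt := mul_exp_lt_one hμ hx.2
  have hsq : weightRatio μ x ^ 2 - 1 ≤ (1 - μ) * (1 - Real.exp (-x)) := calc
    _ = (1 - μ) * (Real.exp x - 1) / (1 + μ * Real.exp x) := by
      rw [weightRatio, Real.sq_sqrt (by positivity), div_sub_one (by positivity)]
      ring
    _ ≤ (1 - μ) * (Real.exp x - 1) / Real.exp x := by
      gcongr ?_ / ?_
      · nlinarith
      · nlinarith
    _ = (1 - μ) * (1 - Real.exp (-x)) := by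
      rw [Real.exp_neg]
      field_simp
  nlinarith [one_le_weightRatio hμ h1 hx.1.le]

theorem abs_sub_mul_le {w r δ : ℝ} (hw : 0 ≤ w) (hr : 1 ≤ r) (hδ : r - 1 ≤ δ) :
    |w - r * w| ≤ δ * w := by
  rw [abs_sub_comm, abs_of_nonneg (by nlinarith)]
  nlinarith

theorem abs_sub_mul_inv_le {w r δ : ℝ} (hw : 0 ≤ w) (hr : 1 ≤ r) (hδ : r - 1 ≤ δ) :
    |w - w * r⁻¹| ≤ δ * w := by
  have hinv : 1 - r⁻¹ ≤ r - 1 := by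
    have hmul : r * r⁻¹ = 1 := mul_inv_cancel₀ (by linarith)
    nlinarith
  have hinv1 : r⁻¹ ≤ 1 := inv_le_one_of_one_le₀ hr
  rw [abs_of_nonneg (by nlinarith)]
  nlinarith

theorem one_sub_le_neg_log (h0 : 0 < μ) : 1 - μ ≤ -Real.log μ := by
  linarith [Real.log_le_sub_one_of_pos h0]

theorem neg_log_le_two_mul (h0 : 1 / 2 ≤ μ) (h1 : μ < 1) : -Real.log μ ≤ 2 * (1 - μ) := by
  have hμ : 0 < μ := by linarith
  calc -Real.log μ ≤ μ⁻¹ - 1 := by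
        rw [← Real.log_inv]
        exact Real.log_le_sub_one_of_pos (inv_pos.2 hμ)
    _ ≤ 2 * (1 - μ) := by
        rw [inv_eq_one_div, div_sub_one hμ.ne', div_le_iff₀ hμ]
        nlinarith

theorem weightOne_le (h0 : 0 < μ) (h1 : μ < 1) (hx : x ∈ Set.Ioo 0 (-Real.log μ)) :
    weightOne μ x ≤ √(-Real.log μ / (-Real.log μ - x)) := by
  have hexp := Real.one_lt_exp_iff.2 hx.1
  have hL : 0 < -Real.log μ - x := sub_pos.2 hx.2
  rw [weightOne]
  refine Real.sqrt_le_sqrt ((div_le_one_of_le₀ ?_ ?_).trans ((one_le_div hL).2 ?_))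
  · nlinarith
  · linarith
  · linarith [hx.1]

theorem mul_sub_le_one_sub_mul_exp (h0 : 0 < μ) (hx : 0 ≤ x) (hxL : x ≤ -Real.log μ) :
    μ * (-Real.log μ - x) ≤ 1 - μ * Real.exp x := by
  have hprod : μ * Real.exp x * Real.exp (-Real.log μ - x) = 1 := by
    rw [mul_assoc, ← Real.exp_add, add_sub_cancel, Real.exp_neg, Real.exp_log h0,
      mul_inv_cancel₀ h0.ne']
  have hexp := mul_le_mul_of_nonneg_left (Real.add_one_le_exp (-Real.log μ - x))
    (by positivity : 0 ≤ μ * Real.exp x)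
  have hμ := mul_le_mul_of_nonneg_right (le_mul_of_one_le_right h0.le (Real.one_le_exp hx))
    (sub_nonneg.2 hxL)
  linarith

theorem weightNegOne_le (h0 : 1 / 2 ≤ μ) (h1 : μ < 1) (hx : x ∈ Set.Ioo 0 (-Real.log μ)) :
    weightNegOne μ x ≤ 3 * √(-Real.log μ / (-Real.log μ - x)) := by
  have hμ : 0 < μ := by linarith
  have hL : 0 < -Real.log μ - x := sub_pos.2 hx.2
  have hlt := mul_exp_lt_one hμ hx.2
  have hlower := mul_sub_le_one_sub_mul_exp hμ hx.1.le hx.2.le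
  have hnum : Real.exp x - μ ≤ 3 * -Real.log μ := by
    nlinarith [one_sub_le_neg_log hμ, Real.exp_pos x]
  have hden : -Real.log μ - x ≤ 2 * (1 - μ * Real.exp x) := by nlinarith
  have hLpos := neg_log_pos hμ h1
  rw [weightNegOne, ← Real.sqrt_sq (zero_le_three (α := ℝ)), ← Real.sqrt_mul (by positivity)]
  refine Real.sqrt_le_sqrt ?_
  rw [← mul_div_assoc, div_le_div_iff₀ (by linarith) hL]
  calc (Real.exp x - μ) * (-Real.log μ - x)
      ≤ 3 * -Real.log μ * (2 * (1 - μ * Real.exp x)) :=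
        mul_le_mul hnum hden hL.le (by linarith)
    _ ≤ 3 ^ 2 * -Real.log μ * (1 - μ * Real.exp x) := by
        nlinarith [mul_pos hLpos (sub_pos.2 hlt)]

theorem expMoment_weightOne_le (h0 : 1 / 2 ≤ μ) (h1 : μ < 1) (m : ℕ) :
    expMoment (weightOne μ) (-Real.log μ) m ≤ 2 * (1 - μ) := by
  have hμ : 0 < μ := by linarith
  refine (expMoment_le_mul_of_le_sqrt_div (neg_log_pos hμ h1).le zero_le_one
    (intervalIntegrable_weightOne hμ h1) (fun x hx => ?_) m).trans ?_
  · simpa using weightOne_le hμ h1 hx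
  · linarith [neg_log_le_two_mul h0 h1]

theorem expMoment_weightNegOne_le (h0 : 1 / 2 ≤ μ) (h1 : μ < 1) (m : ℕ) :
    expMoment (weightNegOne μ) (-Real.log μ) m ≤ 6 * (1 - μ) := by
  have hμ : 0 < μ := by linarith
  refine (expMoment_le_mul_of_le_sqrt_div (neg_log_pos hμ h1).le zero_le_three
    (intervalIntegrable_weightNegOne hμ h1) (fun x hx => weightNegOne_le h0 h1 hx) m).trans ?_
  linarith [neg_log_le_two_mul h0 h1]

theorem sum_sq_expMoment_weightOne_le (h0 : 1 / 2 ≤ μ) (h1 : μ < 1) (M : ℕ) :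
    ∑ j ∈ Finset.range M, expMoment (weightOne μ) (-Real.log μ) j ^ 2 ≤ 72 * (1 - μ) := by
  have hμ : 0 < μ := by linarith
  refine (sum_sq_expMoment_le_of_le_sqrt_div (neg_log_pos hμ h1) zero_le_one
    (intervalIntegrable_weightOne hμ h1) (fun x _ => weightOne_nonneg μ x) (fun x hx => ?_)
    M).trans ?_
  · simpa using weightOne_le hμ h1 hx
  · linarith [neg_log_le_two_mul h0 h1]

theorem sum_sq_expMoment_weightNegOne_le (h0 : 1 / 2 ≤ μ) (h1 : μ < 1) (M : ℕ) :
    ∑ j ∈ Finset.range M, expMoment (weightNegOne μ) (-Real.log μ) j ^ 2 ≤ 72 * (1 - μ) := by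
  have hμ : 0 < μ := by linarith
  refine (sum_sq_expMoment_le_of_le_sqrt_div (neg_log_pos hμ h1) zero_le_three
    (intervalIntegrable_weightNegOne hμ h1) (fun x _ => weightNegOne_nonneg μ x)
    (fun x hx => weightNegOne_le h0 h1 hx) M).trans ?_
  linarith [neg_log_le_two_mul h0 h1]

theorem abs_expMoment_weights_sub_le (h0 : 1 / 2 ≤ μ) (h1 : μ < 1) (m : ℕ) :
    |expMoment (weightOne μ) (-Real.log μ) m +
        (-1) ^ m * expMoment (weightNegOne μ) (-Real.log μ) m -
      (expMoment (fun x => weightRatio μ x * weightOne μ x) (-Real.log μ) m + (-1) ^ m *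
        expMoment (fun x => weightNegOne μ x * (weightRatio μ x)⁻¹) (-Real.log μ) m)| ≤
      (1 - μ) * ((expMoment (weightOne μ) (-Real.log μ) m +
          expMoment (weightNegOne μ) (-Real.log μ) m) -
        (expMoment (weightOne μ) (-Real.log μ) (m + 1) +
          expMoment (weightNegOne μ) (-Real.log μ) (m + 1))) := by
  have hμ : 0 < μ := by linarith
  have hL := (neg_log_pos hμ h1).le
  have hOne := abs_expMoment_sub_le (ε := 1 - μ) hL (intervalIntegrable_weightOne hμ h1)
    (intervalIntegrable_weightRatio_mul_weightOne hμ h1) (fun x hx =>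
      (abs_sub_mul_le (weightOne_nonneg μ x) (one_le_weightRatio hμ h1 hx.1.le)
        (weightRatio_sub_one_le h0 h1 hx)).trans_eq (by ring)) m
  have hNegOne := abs_expMoment_sub_le (ε := 1 - μ) hL (intervalIntegrable_weightNegOne hμ h1)
    (intervalIntegrable_weightNegOne_mul_weightRatio_inv hμ h1) (fun x hx =>
      (abs_sub_mul_inv_le (weightNegOne_nonneg μ x) (one_le_weightRatio hμ h1 hx.1.le)
        (weightRatio_sub_one_le h0 h1 hx)).trans_eq (by ring)) m
  rw [add_sub_add_comm, ← mul_sub]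
  refine (abs_add_le _ _).trans ?_
  rw [abs_mul, abs_neg_one_pow, one_mul]
  linarith

end Weights

/-! ### Asymptotic factorization -/

/-- The operator `A` is `I + H(a)`, in terms of its matrix entries. -/
def IsOneAddHankel (A : l2 →L[ℂ] l2) (a : ℝ → ℂ) : Prop :=
  ∀ j k : ℕ, ent A j k = (if j = k then 1 else 0) + fc a ((j : ℤ) + k + 1)

section Factorization

variable {μ : ℝ} {A A₁ A₂ : l2 →L[ℂ] l2}

theorem IsOneAddHankel.isHankel_sub_one {a : ℝ → ℂ} {c : ℕ → ℝ} (hA : IsOneAddHankel A a)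
    (hac : ∀ m : ℕ, fc a (m + 1) = c m) : IsHankel (A - 1) c := fun j k => by
  rw [ent_sub, ent_one, hA, add_sub_cancel_left, ← hac, Nat.cast_add]

theorem hankelNonneg_expMoment_weightOne (h0 : 0 < μ) (h1 : μ < 1) :
    HankelNonneg (expMoment (weightOne μ) (-Real.log μ)) :=
  hankelNonneg_expMoment (neg_log_pos h0 h1).le (intervalIntegrable_weightOne h0 h1)
    fun x _ => weightOne_nonneg μ x

theorem hankelNonneg_expMoment_weightNegOne (h0 : 0 < μ) (h1 : μ < 1) :
    HankelNonneg (expMoment (weightNegOne μ) (-Real.log μ)) :=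
  hankelNonneg_expMoment (neg_log_pos h0 h1).le (intervalIntegrable_weightNegOne h0 h1)
    fun x _ => weightNegOne_nonneg μ x

theorem hankelNonneg_expMoment_psi (h0 : 0 < μ) (h1 : μ < 1) :
    HankelNonneg fun m =>
      expMoment (fun x => weightRatio μ x * weightOne μ x) (-Real.log μ) m + (-1) ^ m *
        expMoment (fun x => weightNegOne μ x * (weightRatio μ x)⁻¹) (-Real.log μ) m :=
  (hankelNonneg_expMoment (neg_log_pos h0 h1).le
    (intervalIntegrable_weightRatio_mul_weightOne h0 h1)
    fun x _ => mul_nonneg (weightRatio_pos h0 x).le (weightOne_nonneg μ x)).add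
  (hankelNonneg_expMoment (neg_log_pos h0 h1).le
    (intervalIntegrable_weightNegOne_mul_weightRatio_inv h0 h1)
    fun x _ => mul_nonneg (weightNegOne_nonneg μ x)
      (inv_nonneg.2 (weightRatio_pos h0 x).le)).alternating

theorem IsOneAddHankel.isUnit_of_psi (hA : IsOneAddHankel A (psi μ)) (h0 : 0 < μ) (h1 : μ < 1) :
    IsUnit A :=
  (hA.isHankel_sub_one (fc_psi h0 h1)).isUnit (hankelNonneg_expMoment_psi h0 h1)

theorem IsOneAddHankel.isUnit_of_psiOne (hA : IsOneAddHankel A (psiOne μ)) (h0 : 0 < μ)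
    (h1 : μ < 1) : IsUnit A :=
  (hA.isHankel_sub_one (fc_psiOne h0 h1)).isUnit (hankelNonneg_expMoment_weightOne h0 h1)

theorem IsOneAddHankel.isUnit_of_psiNegOne (hA : IsOneAddHankel A (psiNegOne μ)) (h0 : 0 < μ)
    (h1 : μ < 1) : IsUnit A :=
  (hA.isHankel_sub_one (fc_psiNegOne h0 h1)).isUnit
    (hankelNonneg_expMoment_weightNegOne h0 h1).alternating

theorem norm_detP_inverse_psi_sub_mul_le (h0 : 1 / 2 ≤ μ) (h1 : μ < 1)
    (hA : IsOneAddHankel A (psi μ)) (hA₁ : IsOneAddHankel A₁ (psiOne μ))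
    (hA₂ : IsOneAddHankel A₂ (psiNegOne μ)) (n : ℕ) :
    ‖detP n (Ring.inverse A) - detP n (Ring.inverse A₁) * detP n (Ring.inverse A₂)‖ ≤
      152 * (√n * (1 - μ)) := by
  have hμ : 0 < μ := by linarith
  have hL := neg_log_pos hμ h1
  have hi := intervalIntegrable_weightOne hμ h1
  have hi' := intervalIntegrable_weightNegOne hμ h1
  have hw := fun x (_ : x ∈ Set.Ioo 0 (-Real.log μ)) => weightOne_nonneg μ x
  have hw' := fun x (_ : x ∈ Set.Ioo 0 (-Real.log μ)) => weightNegOne_nonneg μ x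
  have hpos := expMoment_nonneg hL.le hi hw
  have hpos' := expMoment_nonneg hL.le hi' hw'
  have hanti := antitone_expMoment hL.le hi hw
  have hanti' := antitone_expMoment hL.le hi' hw'
  have hdiff := (antitone_expMoment_sub_succ hL.le hi hw).add
    (antitone_expMoment_sub_succ hL.le hi' hw')
  refine (norm_detP_inverse_sub_mul_le (hA.isHankel_sub_one (fc_psi hμ h1))
    (hA₁.isHankel_sub_one (fc_psiOne hμ h1)) (hA₂.isHankel_sub_one (fc_psiNegOne hμ h1))
    (hankelNonneg_expMoment_psi hμ h1) (hankelNonneg_expMoment_weightOne hμ h1)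
    (hankelNonneg_expMoment_weightNegOne hμ h1) hanti' hpos' hanti hpos
    (sum_sq_expMoment_weightNegOne_le h0 h1) (sum_sq_expMoment_weightOne_le h0 h1)
    (sub_nonneg.2 h1.le) (fun m => add_nonneg (hpos m) (hpos' m)) (hanti.add hanti')
    (by simpa only [add_sub_add_comm] using hdiff)
    (abs_expMoment_weights_sub_le h0 h1) n).trans ?_
  have hsum := add_le_add (expMoment_weightOne_le h0 h1 0) (expMoment_weightNegOne_le h0 h1 0)
  rw [mul_left_comm 152]
  refine mul_le_mul_of_nonneg_left ?_ (Real.sqrt_nonneg _)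
  nlinarith

theorem tendsto_detP_inverse_psi_sub_mul {μ : ℕ → ℝ} {A A₁ A₂ : ℕ → l2 →L[ℂ] l2}
    (h1 : ∀ᶠ n in atTop, μ n < 1)
    (hμ : Tendsto (fun n : ℕ => √n * (1 - μ n)) atTop (nhds 0))
    (hA : ∀ᶠ n in atTop, IsOneAddHankel (A n) (psi (μ n)))
    (hA₁ : ∀ᶠ n in atTop, IsOneAddHankel (A₁ n) (psiOne (μ n)))
    (hA₂ : ∀ᶠ n in atTop, IsOneAddHankel (A₂ n) (psiNegOne (μ n))) :
    Tendsto (fun n => detP n (Ring.inverse (A n)) -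
      detP n (Ring.inverse (A₁ n)) * detP n (Ring.inverse (A₂ n))) atTop (nhds 0) := by
  refine squeeze_zero_norm' ?_ (by simpa using hμ.const_mul 152)
  filter_upwards [h1, hA, hA₁, hA₂, eventually_ge_atTop 1,
    hμ.eventually_le_const (show (0 : ℝ) < 1 / 2 by norm_num)] with n h1 hA hA₁ hA₂ hn hle
  have hsqrt : 1 ≤ √(n : ℝ) := Real.one_le_sqrt.2 (by exact_mod_cast hn)
  exact norm_detP_inverse_psi_sub_mul_le (by nlinarith) h1 hA hA₁ hA₂ n

theorem comp_inverse_of_isUnit (hA : IsUnit A) :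
    A ∘L Ring.inverse A = 1 ∧ Ring.inverse A ∘L A = 1 :=
  ⟨Ring.mul_inverse_cancel _ hA, Ring.inverse_mul_cancel _ hA⟩

end Factorization

section Parameter

theorem one_sub_sin_div_cos_mem_Ioo {y : ℝ} (hy : y ∈ Set.Ioo 0 (Real.pi / 2)) :
    (1 - Real.sin y) / Real.cos y ∈ Set.Ioo 0 1 := by
  have hcos : 0 < Real.cos y := Real.cos_pos_of_mem_Ioo ⟨by linarith [hy.1, hy.2], hy.2⟩
  have hsin : 0 < Real.sin y := Real.sin_pos_of_pos_of_lt_pi hy.1 (by linarith [hy.1, hy.2])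
  have hsq := Real.sin_sq_add_cos_sq y
  refine ⟨div_pos (by nlinarith) hcos, ?_⟩
  rw [div_lt_one hcos]
  nlinarith [mul_pos hsin hcos]

theorem one_sub_one_sub_sin_div_cos_le {y : ℝ} (hy0 : 0 ≤ y) (hy1 : y ≤ 1) :
    1 - (1 - Real.sin y) / Real.cos y ≤ 2 * y := by
  have hcos_lower := Real.one_sub_sq_div_two_le_cos (x := y)
  have hsin := Real.sin_le hy0
  have hcos := Real.cos_le_one y
  have hhalf : 1 / 2 ≤ Real.cos y := by nlinarith
  rw [one_sub_div (by linarith), div_le_iff₀ (by linarith)]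
  nlinarith

theorem tendsto_sqrt_mul_div_atTop (c : ℝ) :
    Tendsto (fun n : ℕ => √n * (c / n)) atTop (nhds 0) := by
  have h : Tendsto (fun n : ℕ => c * (√n)⁻¹) atTop (nhds (c * 0)) :=
    ((tendsto_inv_atTop_zero.comp Real.tendsto_sqrt_atTop).comp
      tendsto_natCast_atTop_atTop).const_mul c
  rw [mul_zero] at h
  refine h.congr fun n => ?_
  rw [mul_div_left_comm, Real.sqrt_div_self]

variable {α : ℝ}

theorem mem_Ioo_of_div_pi_lt {n : ℕ} (hα : 0 < α) (hn : α / Real.pi < n) :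
    (1 - Real.sin (α / (2 * n))) / Real.cos (α / (2 * n)) ∈ Set.Ioo 0 1 := by
  have hn0 : (0 : ℝ) < n := (div_pos hα Real.pi_pos).trans hn
  refine one_sub_sin_div_cos_mem_Ioo ⟨by positivity, ?_⟩
  rw [div_lt_iff₀ Real.pi_pos] at hn
  rw [div_lt_iff₀ (by positivity)]
  linarith

theorem tendsto_sqrt_mul_one_sub_sin_div_cos (hα : 0 < α) :
    Tendsto (fun n : ℕ => √n * (1 - (1 - Real.sin (α / (2 * n))) / Real.cos (α / (2 * n))))
      atTop (nhds 0) := by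
  have hlarge : ∀ᶠ n : ℕ in atTop, max (α / Real.pi) α < n :=
    tendsto_natCast_atTop_atTop.eventually (eventually_gt_atTop _)
  refine squeeze_zero' ?_ ?_ (tendsto_sqrt_mul_div_atTop α)
  · filter_upwards [hlarge] with n hn
    have hlt := (mem_Ioo_of_div_pi_lt hα ((le_max_left _ _).trans_lt hn)).2
    exact mul_nonneg (Real.sqrt_nonneg _) (sub_nonneg.2 hlt.le)
  · filter_upwards [hlarge] with n hn
    have hα_lt := (le_max_right _ _).trans_lt hn
    have hn0 := hα.trans hα_lt
    gcongr
    refine (one_sub_one_sub_sin_div_cos_le (by positivity) ?_).trans_eq (by field_simp)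
    rw [div_le_one (by positivity)]
    linarith

end Parameter

theorem stmt17_general {s : Set ℕ} (hs : ∀ᶠ n in atTop, n ∈ s)
    {μ : ℕ → ℝ} (hμ : ∀ n ∈ s, μ n ∈ Set.Ioo 0 1)
    (hlim : Tendsto (fun n : ℕ => √n * (1 - μ n)) atTop (nhds 0))
    {A A₁ A₂ : ℕ → l2 →L[ℂ] l2}
    (hA : ∀ n ∈ s, IsOneAddHankel (A n) (psi (μ n)))
    (hA₁ : ∀ n ∈ s, IsOneAddHankel (A₁ n) (psiOne (μ n)))
    (hA₂ : ∀ n ∈ s, IsOneAddHankel (A₂ n) (psiNegOne (μ n))) :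
    ∃ B B₁ B₂ : ℕ → l2 →L[ℂ] l2,
      (∀ n ∈ s,
        (A n ∘L B n = 1 ∧ B n ∘L A n = 1) ∧
        (A₁ n ∘L B₁ n = 1 ∧ B₁ n ∘L A₁ n = 1) ∧
        (A₂ n ∘L B₂ n = 1 ∧ B₂ n ∘L A₂ n = 1)) ∧
      Tendsto (fun n => detP n (B n) - detP n (B₁ n) * detP n (B₂ n)) atTop (nhds 0) :=
  ⟨fun n => Ring.inverse (A n), fun n => Ring.inverse (A₁ n), fun n => Ring.inverse (A₂ n),
    fun n hn =>
      ⟨comp_inverse_of_isUnit ((hA n hn).isUnit_of_psi (hμ n hn).1 (hμ n hn).2),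
        comp_inverse_of_isUnit ((hA₁ n hn).isUnit_of_psiOne (hμ n hn).1 (hμ n hn).2),
        comp_inverse_of_isUnit ((hA₂ n hn).isUnit_of_psiNegOne (hμ n hn).1 (hμ n hn).2)⟩,
    tendsto_detP_inverse_psi_sub_mul (hs.mono fun n hn => (hμ n hn).2) hlim (hs.mono hA)
      (hs.mono hA₁) (hs.mono hA₂)⟩

/-- Fix `α > 0`.  With `ψ_{α,n}`, `ψ_n^{(1)}`, `ψ_n^{(−1)}` as in the paper, the operators
`I + H(ψ_{α,n})`, `I + H(ψ_n^{(1)})`, `I + H(ψ_n^{(−1)})` are invertible and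
`det[Pₙ(I+H(ψ_{α,n}))⁻¹Pₙ] − det[Pₙ(I+H(ψ_n^{(1)}))⁻¹Pₙ]·det[Pₙ(I+H(ψ_n^{(−1)}))⁻¹Pₙ] → 0`
as `n → ∞`. -/
theorem stmt17 (α : ℝ) (hα : 0 < α)
    (μ : ℕ → ℝ)
    (hμ : ∀ n : ℕ, μ n = (1 - Real.sin (α / (2 * n))) / Real.cos (α / (2 * n)))
    (ψ : ℕ → ℝ → ℂ)
    (hψ : ∀ n : ℕ, α / Real.pi < n → ∀ θ : ℝ, ψ n θ =
      Complex.exp ((1 / 2 : ℂ) * Complex.log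
          ((1 + μ n * Complex.exp (-(Complex.I * θ))) /
            (1 - μ n * Complex.exp (-(Complex.I * θ))))) *
        (Complex.exp ((1 / 2 : ℂ) * Complex.log
          ((1 + μ n * Complex.exp (Complex.I * θ)) /
            (1 - μ n * Complex.exp (Complex.I * θ)))))⁻¹ * chi θ)
    (ψ1 ψm : ℕ → ℝ → ℂ)
    (hψ1 : ∀ n : ℕ, α / Real.pi < n → ∀ θ : ℝ, ψ1 n θ =
      uc (-(1/2)) ((Complex.exp (Complex.I * θ) - μ n) /
        (1 - μ n * Complex.exp (Complex.I * θ))) - 1)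
    (hψm : ∀ n : ℕ, α / Real.pi < n → ∀ θ : ℝ, ψm n θ =
      uc (1/2) ((-Complex.exp (Complex.I * θ) - μ n) /
        (1 + μ n * Complex.exp (Complex.I * θ))) - 1)
    (A A1 A2 : ℕ → l2 →L[ℂ] l2)
    (hA : ∀ n : ℕ, α / Real.pi < n → ∀ j k : ℕ,
      ent (A n) j k = (if j = k then 1 else 0) + fc (ψ n) ((j : ℤ) + k + 1))
    (hA1 : ∀ n : ℕ, α / Real.pi < n → ∀ j k : ℕ,
      ent (A1 n) j k = (if j = k then 1 else 0) + fc (ψ1 n) ((j : ℤ) + k + 1))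
    (hA2 : ∀ n : ℕ, α / Real.pi < n → ∀ j k : ℕ,
      ent (A2 n) j k = (if j = k then 1 else 0) + fc (ψm n) ((j : ℤ) + k + 1)) :
    ∃ B B1 B2 : ℕ → l2 →L[ℂ] l2,
      (∀ n : ℕ, α / Real.pi < n →
        (A n ∘L B n = 1 ∧ B n ∘L A n = 1) ∧
        (A1 n ∘L B1 n = 1 ∧ B1 n ∘L A1 n = 1) ∧
        (A2 n ∘L B2 n = 1 ∧ B2 n ∘L A2 n = 1)) ∧
      Tendsto (fun n : ℕ => detP n (B n) - detP n (B1 n) * detP n (B2 n))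
        atTop (nhds 0) := by
  obtain rfl : μ = fun n : ℕ => (1 - Real.sin (α / (2 * n))) / Real.cos (α / (2 * n)) := funext hμ
  exact stmt17_general (s := {n | α / Real.pi < n})
    (tendsto_natCast_atTop_atTop.eventually (eventually_gt_atTop _))
    (fun n hn => mem_Ioo_of_div_pi_lt hα hn) (tendsto_sqrt_mul_one_sub_sin_div_cos hα)
    (fun n hn => (funext (hψ n hn) : ψ n = psi _) ▸ hA n hn)
    (fun n hn => (funext (hψ1 n hn) : ψ1 n = psiOne _) ▸ hA1 n hn)
    fun n hn => (funext (hψm n hn) : ψm n = psiNegOne _) ▸ hA2 n hn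

end
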